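/- arXiv:math/0212267 — 6 statements merged into one kernel-verified Lean document; each statement's English description precedes it below -/
import Mathlib

section
/- For every even integer n ≥ 1, the number of 123-avoiding involutions of {1,2,…,n} with no fixed points equals the binomial coefficient C(n-1, n/2); for every odd n ≥ 1 this number is 0. -/
/-- The number of fixed points of a permutation of `Fin n`. -/
def fixedPts {n : ℕ} (π : Equiv.Perm (Fin n)) : ℕ :=
  (Finset.univ.filter fun i => π i = i).card

/-- A permutation is an involution if it is its own inverse. -/
def IsInvolution {n : ℕ} (π : Equiv.Perm (Fin n)) : Prop :=
  ∀ i, π (π i) = i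

/-- A permutation of `Fin n` avoids the pattern 123. -/
def Avoids123 {n : ℕ} (π : Equiv.Perm (Fin n)) : Prop :=
  ¬ ∃ i₁ i₂ i₃ : Fin n, i₁ < i₂ ∧ i₂ < i₃ ∧ (π i₁ < π i₂ ∧ π i₂ < π i₃)

/-- `i_n^k(123)`: the number of 123-avoiding involutions of `{1, …, n}` with exactly
`k` fixed points. -/
noncomputable def iCount123 (n k : ℕ) : ℕ :=
  Nat.card {π : Equiv.Perm (Fin n) // IsInvolution π ∧ Avoids123 π ∧ fixedPts π = k}

/-!
A 123-avoiding permutation is the union of two decreasing sequences: its left-to-right minima and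
its other entries. An involution permutes the positions of its left-to-right minima, so a
123-avoiding involution reverses each of the two classes of positions and is determined by its word
of minima (`true`) and non-minima (`false`). The words that occur are those in which every prefix
with more `false`s than some suffix also has more `true`s than it, and fixed points are absent
exactly when both letters occur an even number of times. Peeling letters off both ends of such a
word, so that its `false`s disappear in pairs, gives a recursion for the number of words in terms of
the excess `d` of `true`s removed on the left over those removed on the right. It is the recursion
of walks staying positive, solved by sums of consecutive binomial coefficients around the middle of
a row of Pascal's triangle.
-/

section BinomialSums

/-- The sum of the `k` binomial coefficients nearest to the middle of the `t`-th row, those to the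
left of the middle being written as their mirror images. It counts the `±1` walks of length `t`
from `k` that stay positive. -/
def centralChooseSum (t k : ℕ) : ℕ :=
  ∑ i ∈ Finset.range k, t.choose ((t + i + 1) / 2)

lemma choose_half_eq_choose_succ_half (t : ℕ) : t.choose (t / 2) = t.choose ((t + 1) / 2) :=
  Nat.choose_symm_of_eq_add (by omega)

lemma centralChooseSum_succ_succ (t k : ℕ) :
    centralChooseSum (t + 1) (k + 1) = centralChooseSum t (k + 2) + centralChooseSum t k := by
  have half_add_two (i : ℕ) : (t + 1 + i + 1) / 2 = (t + i) / 2 + 1 := by omega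
  have half_shift (i : ℕ) : (t + (i + 1) + 1) / 2 = (t + i) / 2 + 1 := by omega
  calc centralChooseSum (t + 1) (k + 1)
      = ∑ i ∈ Finset.range (k + 1), t.choose ((t + i) / 2)
        + ∑ i ∈ Finset.range (k + 1), t.choose ((t + i) / 2 + 1) := by
        simp only [centralChooseSum, half_add_two, Nat.choose_succ_succ', Finset.sum_add_distrib]
    _ = centralChooseSum t k + t.choose ((t + 1) / 2)
        + ∑ i ∈ Finset.range (k + 1), t.choose ((t + i) / 2 + 1) := by
        rw [Finset.sum_range_succ', add_zero, choose_half_eq_choose_succ_half]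
        rfl
    _ = centralChooseSum t (k + 2) + centralChooseSum t k := by
        simp only [centralChooseSum, Finset.sum_range_succ' _ (k + 1), half_shift, add_zero]
        ring

end BinomialSums

section Words

variable {A : Type*}

/-- The number of words of length `n` with the property `P`; words of length `n` are encoded as
functions on `Fin n`. -/
noncomputable def wordCount (n : ℕ) (P : List A → Prop) : ℕ :=
  Nat.card {f : Fin n → A // P (List.ofFn f)}

lemma wordCount_zero_of_nil {P : List A → Prop} (h : P []) : wordCount 0 P = 1 := by
  simp [wordCount, h]

lemma wordCount_zero_of_not_nil {P : List A → Prop} (h : ¬ P []) : wordCount 0 P = 0 := by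
  simp [wordCount, h]

lemma wordCount_eq_zero {P : List A → Prop} (h : ∀ w, ¬ P w) (n : ℕ) : wordCount n P = 0 := by
  simp [wordCount, h]

lemma wordCount_succ_cons [Fintype A] (n : ℕ) (P : List A → Prop) :
    wordCount (n + 1) P = ∑ a, wordCount n fun w => P (a :: w) := by
  let e : {f : Fin (n + 1) → A // P (List.ofFn f)} ≃ Σ a, {g : Fin n → A // P (a :: List.ofFn g)} :=
    ((Fin.consEquiv fun _ => A).symm.subtypeEquiv fun f => by
      rw [List.ofFn_succ]; rfl).trans
      (Equiv.subtypeProdEquivSigmaSubtype fun a g => P (a :: List.ofFn g))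
  rw [wordCount, Nat.card_congr e, Nat.card_sigma]
  rfl

lemma wordCount_succ_concat [Fintype A] (n : ℕ) (P : List A → Prop) :
    wordCount (n + 1) P = ∑ a, wordCount n fun w => P (w ++ [a]) := by
  let e : {f : Fin (n + 1) → A // P (List.ofFn f)} ≃
      Σ a, {g : Fin n → A // P (List.ofFn g ++ [a])} :=
    ((Fin.snocEquiv fun _ => A).symm.subtypeEquiv fun f => by
      rw [List.ofFn_succ', List.concat_eq_append]; rfl).trans
      (Equiv.subtypeProdEquivSigmaSubtype fun a g => P (List.ofFn g ++ [a]))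
  rw [wordCount, Nat.card_congr e, Nat.card_sigma]
  rfl

end Words

section PrefixDominance

/-- Every prefix with more `false`s than some suffix also has more `true`s than it, when the prefix
is granted `d` additional `true`s. -/
def PrefixDominant (d : ℕ) (w : List Bool) : Prop :=
  ∀ u v : List Bool, u <+: w → v <:+ w →
    v.count false < u.count false → v.count true < d + u.count true

/-- The words of left-to-right minima of fixed-point-free 123-avoiding involutions (for `d = 0`),
and what remains of them after letters have been peeled off at both ends, `d` being the excess of
`true`s removed on the left over those removed on the right. -/
def Admissible (d : ℕ) (w : List Bool) : Prop :=
  Even (w.count false) ∧ PrefixDominant d w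

variable {d : ℕ} {w : List Bool}

lemma prefixDominant_nil : PrefixDominant d [] := by
  intro u v hu
  simp [List.prefix_nil.1 hu]

lemma prefixDominant_true_cons : PrefixDominant d (true :: w) ↔ PrefixDominant (d + 1) w := by
  constructor
  · intro h u v hu hv hlt
    have := h (true :: u) v ((List.prefix_cons_inj true).2 hu) (hv.trans (List.suffix_cons true w))
      (by simpa using hlt)
    simp only [List.count_cons_self] at this
    omega
  · intro h u v hu hv hlt
    obtain rfl | ⟨u, rfl, hu'⟩ := List.prefix_cons_iff.1 hu
    · simp at hlt
    obtain rfl | hv' := List.suffix_cons_iff.1 hv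
    · exact absurd hlt (hu.sublist.count_le false).not_gt
    have := h u v hu' hv' (by simpa using hlt)
    simp only [List.count_cons_self]
    omega

lemma prefixDominant_concat_true :
    PrefixDominant (d + 1) (w ++ [true]) ↔ PrefixDominant d w := by
  constructor
  · intro h u v hu hv hlt
    have := h u (v ++ [true]) (hu.trans (List.prefix_append w [true]))
      (List.suffix_append_self_iff.2 hv) (by simpa using hlt)
    simp only [List.count_append, List.count_singleton_self] at this
    omega
  · intro h u v hu hv hlt
    obtain rfl | hu' := List.prefix_concat_iff.1 hu
    · exact (hv.sublist.count_le true).trans_lt (by omega)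
    obtain rfl | ⟨v, rfl, hv'⟩ := List.suffix_concat_iff.1 hv
    · simp only [List.count_nil]
      omega
    have := h u v hu' hv' (by simpa using hlt)
    simp only [List.count_append, List.count_singleton_self]
    omega

lemma prefixDominant_false_cons_concat_false :
    PrefixDominant (d + 1) (false :: (w ++ [false])) ↔ PrefixDominant (d + 1) w := by
  constructor
  · intro h u v hu hv hlt
    have := h (false :: u) (v ++ [false])
      ((List.prefix_cons_inj false).2 (hu.trans (List.prefix_append w [false])))
      (List.suffix_append_self_iff (l₂ := false :: w).2 (hv.trans (List.suffix_cons false w)))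
      (by simpa using hlt)
    simpa using this
  · intro h u v hu hv hlt
    rw [← List.cons_append] at hu hv
    obtain rfl | hu' := List.prefix_concat_iff.1 hu
    · exact (hv.sublist.count_le true).trans_lt (by omega)
    obtain rfl | ⟨u, rfl, hu''⟩ := List.prefix_cons_iff.1 hu'
    · simp at hlt
    obtain rfl | ⟨v, rfl, hv'⟩ := List.suffix_concat_iff.1 hv
    · simp only [List.count_nil]
      omega
    obtain rfl | hv'' := List.suffix_cons_iff.1 hv'
    · exact absurd hlt (hu.sublist.count_le false).not_gt
    simpa using h u v hu'' hv'' (by simpa using hlt)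

lemma PrefixDominant.pos_of_false_cons (h : PrefixDominant d (false :: w)) : 0 < d := by
  simpa using h [false] [] (List.prefix_append [false] w) List.nil_suffix

lemma admissible_true_cons : Admissible d (true :: w) ↔ Admissible (d + 1) w :=
  and_congr (by simp) prefixDominant_true_cons

lemma admissible_false_cons_concat_true :
    Admissible (d + 1) (false :: (w ++ [true])) ↔ Admissible d (false :: w) :=
  and_congr (by simp) (prefixDominant_concat_true (w := false :: w))

lemma admissible_false_cons_concat_false :
    Admissible (d + 1) (false :: (w ++ [false])) ↔ Admissible (d + 1) w :=
  and_congr (by simp [parity_simps]) prefixDominant_false_cons_concat_false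

lemma wordCount_admissible_succ (n d : ℕ) :
    wordCount (n + 1) (Admissible d) =
      wordCount n (Admissible (d + 1)) + wordCount n fun w => Admissible d (false :: w) := by
  simp only [wordCount_succ_cons, Fintype.sum_bool, admissible_true_cons]

lemma wordCount_admissible_false_cons_succ (n d : ℕ) :
    (wordCount (n + 1) fun w => Admissible (d + 1) (false :: w)) =
      (wordCount n fun w => Admissible d (false :: w)) + wordCount n (Admissible (d + 1)) := by
  simp only [wordCount_succ_concat, Fintype.sum_bool, admissible_false_cons_concat_true,
    admissible_false_cons_concat_false]

lemma wordCount_admissible_zero_false_cons (n : ℕ) :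
    (wordCount n fun w => Admissible 0 (false :: w)) = 0 :=
  wordCount_eq_zero (fun _ h => h.2.pos_of_false_cons.ne rfl) n

lemma wordCount_zero_admissible (d : ℕ) : wordCount 0 (Admissible d) = 1 :=
  wordCount_zero_of_nil ⟨by simp, prefixDominant_nil⟩

lemma wordCount_zero_admissible_false_cons (d : ℕ) :
    (wordCount 0 fun w => Admissible d (false :: w)) = 0 :=
  wordCount_zero_of_not_nil fun h => by simpa using h.1

lemma wordCount_admissible_eq_centralChooseSum (t : ℕ) : ∀ d,
    wordCount (t + 1) (Admissible d) = centralChooseSum t (d + 1) ∧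
      (wordCount (t + 1) fun w => Admissible d (false :: w)) = centralChooseSum t d := by
  induction t with
  | zero =>
    have sum_zero_succ (k : ℕ) : centralChooseSum 0 (k + 1) = 1 := by
      simp [centralChooseSum, Finset.sum_range_succ', Nat.choose_eq_zero_iff]
    rintro (_ | d)
    · simp [wordCount_admissible_succ, wordCount_zero_admissible,
        wordCount_admissible_zero_false_cons, centralChooseSum]
    · simp [wordCount_admissible_succ, wordCount_admissible_false_cons_succ,
        wordCount_zero_admissible, wordCount_zero_admissible_false_cons, sum_zero_succ]
  | succ t ih =>
    intro d
    refine ⟨?_, ?_⟩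
    · rw [wordCount_admissible_succ, (ih (d + 1)).1, (ih d).2, centralChooseSum_succ_succ]
    · obtain _ | d := d
      · exact wordCount_admissible_zero_false_cons _
      · rw [wordCount_admissible_false_cons_succ, (ih d).2, (ih (d + 1)).1,
          centralChooseSum_succ_succ, add_comm]

lemma wordCount_admissible_zero (t : ℕ) :
    wordCount (t + 1) (Admissible 0) = t.choose ((t + 1) / 2) := by
  simp [(wordCount_admissible_eq_centralChooseSum t 0).1, centralChooseSum]

end PrefixDominance

section Parity

open Finset

lemma even_card_filter_ne_of_involutive {α : Type*} [DecidableEq α] {g : α → α}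
    (hg : g.Involutive) {s : Finset α} (hs : ∀ x ∈ s, g x ∈ s) : Even #{x ∈ s | g x ≠ x} := by
  have sum_eq_zero : ∑ x ∈ s with g x ≠ x, (1 : ZMod 2) = 0 :=
    sum_involution (fun x _ => g x) (fun _ _ => by decide)
      (fun x hx _ => (mem_filter.1 hx).2)
      (fun x hx => mem_filter.2
        ⟨hs x (mem_filter.1 hx).1, by simpa [hg x] using (mem_filter.1 hx).2.symm⟩)
      (fun x _ => hg x)
  rwa [sum_const, nsmul_one, ZMod.natCast_eq_zero_iff_even] at sum_eq_zero

end Parity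

section ReversesFibers

open Finset

variable {α C : Type*} [LinearOrder α]

/-- `π` maps every fiber of the coloring `f` to itself, reversing its order. -/
structure ReversesFibers (f : α → C) (π : Equiv.Perm α) : Prop where
  color_apply : ∀ x, f (π x) = f x
  apply_lt_apply : ∀ {x y}, x < y → f x = f y → π y < π x

namespace ReversesFibers

variable {f : α → C} {π σ : Equiv.Perm α}

/-- The restriction of a fiber-reversing permutation to the fiber of color `c`, as an
order isomorphism onto the dual order. -/
noncomputable def fiberOrderIso (h : ReversesFibers f π) (c : C) :
    {x // f x = c} ≃o {x // f x = c}ᵒᵈ :=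
  StrictMono.orderIsoOfSurjective
    (fun x => OrderDual.toDual ⟨π x, (h.color_apply x).trans x.2⟩)
    (fun x y hxy => h.apply_lt_apply hxy (x.2.trans y.2.symm))
    (fun y => ⟨⟨π.symm y.ofDual.1, by
      rw [← h.color_apply, π.apply_symm_apply, y.ofDual.2]⟩, by simp⟩)

lemma unique [Finite α] (hπ : ReversesFibers f π) (hσ : ReversesFibers f σ) : π = σ := by
  ext x
  have fiber_eq := Subsingleton.elim (hπ.fiberOrderIso (f x)) (hσ.fiberOrderIso (f x))
  exact congrArg Subtype.val (DFunLike.congr_fun fiber_eq ⟨x, rfl⟩)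

lemma symm (h : ReversesFibers f π) : ReversesFibers f π.symm where
  color_apply x := by rw [← h.color_apply, π.apply_symm_apply]
  apply_lt_apply {x y} hxy hf := by
    by_contra! hle
    obtain heq | hlt := hle.eq_or_lt
    · exact hxy.ne (π.symm.injective heq)
    · refine hxy.not_gt ?_
      simpa using h.apply_lt_apply hlt (by
        rw [← h.color_apply, ← h.color_apply (π.symm y)]; simpa using hf)

lemma involutive [Finite α] (h : ReversesFibers f π) : Function.Involutive π := fun x => by
  nth_rw 1 [h.unique h.symm]
  exact π.symm_apply_apply x

end ReversesFibers

lemma nonempty_orderIso_orderDual (β : Type*) [LinearOrder β] [Finite β] :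
    Nonempty (β ≃o βᵒᵈ) := by
  have := Fintype.ofFinite β
  let e := Fintype.orderIsoFinOfCardEq β rfl
  exact ⟨e.symm.trans (Fin.revOrderIso.symm.trans e.dual)⟩

lemma exists_reversesFibers [Finite α] (f : α → C) : ∃ π, ReversesFibers f π := by
  let e (c : C) : {x // f x = c} ≃o {x // f x = c}ᵒᵈ := (nonempty_orderIso_orderDual _).some
  let π : Equiv.Perm α := Equiv.ofFiberEquiv fun c => (e c).toEquiv.trans OrderDual.ofDual
  have apply_eq {c : C} {x : α} (hx : f x = c) : π x = (OrderDual.ofDual (e c ⟨x, hx⟩)).1 := by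
    subst hx; rfl
  refine ⟨π, fun x => Equiv.ofFiberEquiv_map _ x, fun {x y} hxy hf => ?_⟩
  rw [apply_eq hf, apply_eq rfl]
  exact (e (f y)).strictMono (show (⟨x, hf⟩ : {z // f z = f y}) < ⟨y, rfl⟩ from hxy)

namespace ReversesFibers

variable {f : α → C} {π : Equiv.Perm α}

lemma eq_of_fixed (h : ReversesFibers f π) {x y : α} (hx : π x = x) (hy : π y = y)
    (hf : f x = f y) : x = y := by
  by_contra hne
  obtain hlt | hlt := lt_or_gt_of_ne hne
  · exact hlt.not_gt (by simpa only [hx, hy] using h.apply_lt_apply hlt hf)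
  · exact hlt.not_gt (by simpa only [hx, hy] using h.apply_lt_apply hlt hf.symm)

variable [Fintype α] [DecidableEq C]

lemma forall_apply_ne_iff_even_card (h : ReversesFibers f π) :
    (∀ x, π x ≠ x) ↔ ∀ c, Even #{x | f x = c} := by
  have even_moved (c : C) : Even #{x ∈ {x | f x = c} | π x ≠ x} :=
    even_card_filter_ne_of_involutive h.involutive fun x hx => by
      simpa [h.color_apply] using hx
  refine ⟨fun hne c => by simpa [filter_true_of_mem, hne] using even_moved c,
    fun heven x hx => ?_⟩
  have moved_eq : ({y ∈ {y | f y = f x} | π y ≠ y} : Finset α) =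
      ({y | f y = f x} : Finset α).erase x := by
    ext y
    simp only [mem_filter, mem_univ, true_and, mem_erase]
    exact ⟨fun ⟨hf, hy⟩ => ⟨fun hyx => hy (hyx ▸ hx), hf⟩,
      fun ⟨hyx, hf⟩ => ⟨hf, fun hy => hyx (h.eq_of_fixed hy hx hf)⟩⟩
  have card_eq := card_erase_add_one (s := {y | f y = f x}) (a := x) (by simp)
  have even_erase := even_moved (f x)
  rw [moved_eq] at even_erase
  exact Nat.not_even_iff_odd.2 even_erase.add_one (card_eq ▸ heven (f x))

end ReversesFibers

namespace ReversesFibers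

variable {n : ℕ} {f : Fin n → C} {π : Equiv.Perm (Fin n)} [DecidableEq C]

lemma card_lt_card_iff (h : ReversesFibers f π) (c : C) (i j : ℕ) :
    #{x | j ≤ x.val ∧ f x = c} < #{x | x.val < i ∧ f x = c} ↔
      ∃ x, f x = c ∧ x.val < i ∧ (π x).val < j := by
  constructor
  · intro hlt
    by_contra! hge
    rw [← card_map π.toEmbedding (s := {x : Fin n | x.val < i ∧ f x = c})] at hlt
    refine hlt.not_ge (card_le_card fun y hy => ?_)
    obtain ⟨x, hx, rfl⟩ := mem_map.1 hy
    simp only [mem_filter_univ] at hx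
    exact mem_filter_univ _ |>.2 ⟨hge x hx.2 hx.1, (h.color_apply x).trans hx.2⟩
  · rintro ⟨x, hx, hxi, hxj⟩
    rw [← card_map π.toEmbedding (s := {x : Fin n | j ≤ x.val ∧ f x = c})]
    have map_lt {y : Fin n} (hy : j ≤ y.val) (hf : f y = c) : (π y).val < x := by
      simpa [h.involutive x] using
        h.apply_lt_apply (hxj.trans_le hy) (by rw [h.color_apply, hx, hf])
    refine card_lt_card <| (ssubset_iff_of_subset ?_).2 ⟨x, by simp [hx, hxi], ?_⟩
    · intro z hz
      obtain ⟨y, hy, rfl⟩ := mem_map.1 hz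
      simp only [mem_filter_univ] at hy
      exact mem_filter_univ _ |>.2
        ⟨(map_lt hy.1 hy.2).trans hxi, (h.color_apply y).trans hy.2⟩
    · simp only [mem_map, mem_filter_univ, not_exists, not_and]
      exact fun y hy hyx => (map_lt hy.1 hy.2).ne (congrArg Fin.val hyx)

end ReversesFibers

end ReversesFibers

section LeftRightMinima

variable {α : Type*} [LinearOrder α] {π : Equiv.Perm α} {x : α}

open Classical in
/-- The coloring that is `true` at the positions of the left-to-right minima of `π`. -/
noncomputable def leftRightMin (π : Equiv.Perm α) (x : α) : Bool :=
  decide (∀ y < x, π x < π y)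

lemma leftRightMin_eq_true : leftRightMin π x = true ↔ ∀ y < x, π x < π y := by
  simp only [leftRightMin, decide_eq_true_eq]

lemma leftRightMin_eq_false : leftRightMin π x = false ↔ ∃ y < x, π y < π x := by
  rw [leftRightMin, decide_eq_false_iff_not]
  push Not
  exact exists_congr fun y => and_congr_right fun hy => (π.injective.ne hy.ne).le_iff_lt

lemma exists_leftRightMin_lt [WellFoundedLT α] (hx : leftRightMin π x = false) :
    ∃ y < x, leftRightMin π y = true ∧ π y < π x := by
  have below_nonempty : {y | π y < π x}.Nonempty :=
    let ⟨y, _, hy⟩ := leftRightMin_eq_false.1 hx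
    ⟨y, hy⟩
  obtain ⟨y, hy, y_min⟩ := WellFounded.has_min wellFounded_lt _ below_nonempty
  refine ⟨y, ?_, leftRightMin_eq_true.2 fun z hz => hy.trans_le (le_of_not_gt (y_min z · hz)), hy⟩
  obtain ⟨z, hzx, hz⟩ := leftRightMin_eq_false.1 hx
  exact (le_of_not_gt (y_min z hz)).trans_lt hzx

lemma leftRightMin_apply (hπ : Function.Involutive π) (x : α) :
    leftRightMin π (π x) = leftRightMin π x := by
  have false_iff (x : α) : leftRightMin π (π x) = false ↔ leftRightMin π x = false := by
    rw [leftRightMin_eq_false, leftRightMin_eq_false, ← hπ.toPerm.exists_congr_right]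
    simp [hπ _, and_comm]
  simpa using (false_iff x).not

/-- Every entry not colored `true` exceeds an earlier entry colored `true`. -/
def ExceedsEarlierTrue (f : α → Bool) (π : Equiv.Perm α) : Prop :=
  ∀ x, f x = false → ∃ y < x, f y = true ∧ π y < π x

lemma ReversesFibers.leftRightMin_eq {f : α → Bool} (h : ReversesFibers f π)
    (hf : ExceedsEarlierTrue f π) : leftRightMin π = f := by
  ext x
  cases hx : f x
  · obtain ⟨y, hyx, -, hπ⟩ := hf x hx
    exact leftRightMin_eq_false.2 ⟨y, hyx, hπ⟩
  · refine leftRightMin_eq_true.2 fun y hyx => ?_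
    cases hy : f y
    · obtain ⟨z, hzy, hz, hπ⟩ := hf y hy
      exact (h.apply_lt_apply (hzy.trans hyx) (hz.trans hx.symm)).trans hπ
    · exact h.apply_lt_apply hyx (hy.trans hx.symm)

end LeftRightMinima

section Avoids123

variable {n : ℕ} {π : Equiv.Perm (Fin n)}

lemma Avoids123.reversesFibers (hav : Avoids123 π) (hinv : IsInvolution π) :
    ReversesFibers (leftRightMin π) π where
  color_apply := leftRightMin_apply hinv
  apply_lt_apply {x y} hxy hf := by
    cases hx : leftRightMin π x
    · obtain ⟨z, hzx, hπ⟩ := leftRightMin_eq_false.1 hx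
      by_contra! hle
      exact hav ⟨z, x, y, hzx, hxy, hπ, hle.lt_of_ne (π.injective.ne hxy.ne)⟩
    · exact leftRightMin_eq_true.1 (hf.symm.trans hx) x hxy

lemma ReversesFibers.avoids123 {f : Fin n → Bool} (h : ReversesFibers f π) : Avoids123 π := by
  rintro ⟨x, y, z, hxy, hyz, hπxy, hπyz⟩
  have hf_xy : f x ≠ f y := fun hf => (h.apply_lt_apply hxy hf).not_gt hπxy
  have hf_yz : f y ≠ f z := fun hf => (h.apply_lt_apply hyz hf).not_gt hπyz
  have hf_xz : f x = f z := by
    rw [Bool.eq_not_of_ne hf_xy, Bool.eq_not_of_ne hf_yz, Bool.not_not]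
  exact (h.apply_lt_apply (hxy.trans hyz) hf_xz).not_gt (hπxy.trans hπyz)

lemma fixedPts_eq_zero_iff_forall_apply_ne : fixedPts π = 0 ↔ ∀ x, π x ≠ x := by
  simp [fixedPts, Finset.filter_eq_empty_iff]

lemma IsInvolution.even_of_fixedPts_eq_zero (hinv : IsInvolution π) (hfix : fixedPts π = 0) :
    Even n := by
  simpa [Finset.filter_true_of_mem, fixedPts_eq_zero_iff_forall_apply_ne.1 hfix] using
    even_card_filter_ne_of_involutive hinv (s := Finset.univ) (by simp)

end Avoids123

section ColorWords

open Finset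

lemma count_take_ofFn {A : Type*} [DecidableEq A] {n : ℕ} (f : Fin n → A) (a : A) (i : ℕ) :
    ((List.ofFn f).take i).count a = #{x | x.val < i ∧ f x = a} := by
  induction n generalizing i with
  | zero => simp
  | succ n ih =>
    obtain _ | i := i
    · simp
    rw [List.ofFn_succ, List.take_succ_cons, List.count_cons, ih, Fin.card_filter_univ_succ]
    split_ifs <;> simp_all [add_comm]

lemma count_drop_ofFn {A : Type*} [DecidableEq A] {n : ℕ} (f : Fin n → A) (a : A) (i : ℕ) :
    ((List.ofFn f).drop i).count a = #{x | i ≤ x.val ∧ f x = a} := by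
  induction n generalizing i with
  | zero => simp
  | succ n ih =>
    obtain _ | i := i
    · simpa [List.take_of_length_le, Fin.is_le] using count_take_ofFn f a (n + 1)
    rw [List.ofFn_succ, List.drop_succ_cons, ih, Fin.card_filter_univ_succ]
    simp

variable {n : ℕ} {f : Fin n → Bool} {π : Equiv.Perm (Fin n)}

lemma prefixDominant_ofFn_iff {d : ℕ} :
    PrefixDominant d (List.ofFn f) ↔ ∀ i j : ℕ,
      #{x | j ≤ x.val ∧ f x = false} < #{x | x.val < i ∧ f x = false} →
        #{x | j ≤ x.val ∧ f x = true} < d + #{x | x.val < i ∧ f x = true} := by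
  simp only [← count_take_ofFn, ← count_drop_ofFn]
  refine ⟨fun h i j => h _ _ (List.take_prefix i _) (List.drop_suffix j _),
    fun h u v hu hv => ?_⟩
  rw [List.prefix_iff_eq_take.1 hu, List.suffix_iff_eq_drop.1 hv]
  exact h _ _

lemma ReversesFibers.prefixDominant_iff (h : ReversesFibers f π) :
    PrefixDominant 0 (List.ofFn f) ↔ ExceedsEarlierTrue f π := by
  simp only [prefixDominant_ofFn_iff, zero_add, h.card_lt_card_iff]
  constructor
  · intro hdom x hx
    obtain ⟨y, hy, hyx, hπ⟩ := hdom (x + 1) (π x + 1)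
      ⟨x, hx, Nat.lt_succ_self _, Nat.lt_succ_self _⟩
    have hne : y ≠ x := by
      rintro rfl
      simp [hx] at hy
    exact ⟨y, (Fin.le_def.2 (Nat.le_of_lt_succ hyx)).lt_of_ne hne, hy,
      (Fin.le_def.2 (Nat.le_of_lt_succ hπ)).lt_of_ne (π.injective.ne hne)⟩
  · rintro hf i j ⟨x, hx, hxi, hxj⟩
    obtain ⟨y, hyx, hy, hπ⟩ := hf x hx
    exact ⟨y, hy, (Fin.lt_def.1 hyx).trans hxi, (Fin.lt_def.1 hπ).trans hxj⟩

lemma ReversesFibers.fixedPts_eq_zero_iff (h : ReversesFibers f π) (hn : Even n) :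
    fixedPts π = 0 ↔ Even ((List.ofFn f).count false) := by
  have count_false : (List.ofFn f).count false = #{x | f x = false} := by
    simpa using count_drop_ofFn f false 0
  have card_add_card : #{x | f x = false} + #{x | f x = true} = n := by
    simpa using card_filter_add_card_filter_not (s := univ) fun x => f x = false
  rw [fixedPts_eq_zero_iff_forall_apply_ne, h.forall_apply_ne_iff_even_card, Bool.forall_bool,
    count_false, and_iff_left_of_imp]
  exact (Nat.even_add.1 (card_add_card.symm ▸ hn)).1

lemma bijOn_leftRightMin (hn : Even n) :
    Set.BijOn leftRightMin
      {π : Equiv.Perm (Fin n) | IsInvolution π ∧ Avoids123 π ∧ fixedPts π = 0}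
      {f | Admissible 0 (List.ofFn f)} := by
  refine ⟨?_, ?_, ?_⟩
  · rintro π ⟨hinv, hav, hfix⟩
    have hrev := hav.reversesFibers hinv
    exact ⟨(hrev.fixedPts_eq_zero_iff hn).1 hfix,
      hrev.prefixDominant_iff.2 fun _ => exists_leftRightMin_lt⟩
  · rintro π ⟨hπ, hπ_av, -⟩ σ ⟨hσ, hσ_av, -⟩ heq
    exact (heq ▸ hπ_av.reversesFibers hπ).unique (hσ_av.reversesFibers hσ)
  · rintro f ⟨heven, hdom⟩
    obtain ⟨π, hrev⟩ := exists_reversesFibers f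
    exact ⟨π, ⟨hrev.involutive, hrev.avoids123, (hrev.fixedPts_eq_zero_iff hn).2 heven⟩,
      hrev.leftRightMin_eq (hrev.prefixDominant_iff.1 hdom)⟩

end ColorWords

lemma iCount123_zero_of_even {n : ℕ} (hn : Even n) :
    iCount123 n 0 = wordCount n (Admissible 0) :=
  Nat.card_congr ((bijOn_leftRightMin hn).equiv leftRightMin)

lemma iCount123_zero_of_odd {n : ℕ} (hn : Odd n) : iCount123 n 0 = 0 := by
  have : IsEmpty {π : Equiv.Perm (Fin n) // IsInvolution π ∧ Avoids123 π ∧ fixedPts π = 0} :=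
    ⟨fun ⟨_, hinv, _, hfix⟩ => Nat.not_even_iff_odd.2 hn (hinv.even_of_fixedPts_eq_zero hfix)⟩
  exact Nat.card_of_isEmpty

/-- For every even `n ≥ 1`, the number of 123-avoiding involutions of `{1, …, n}` with no
fixed points equals `C(n-1, n/2)`; for every odd `n ≥ 1` this number is `0`. -/
theorem statement0 (n : ℕ) (hn : 1 ≤ n) :
    (Even n → iCount123 n 0 = (n - 1).choose (n / 2)) ∧
    (Odd n → iCount123 n 0 = 0) := by
  obtain ⟨t, rfl⟩ := Nat.exists_eq_add_of_le' hn
  refine ⟨fun heven => ?_, iCount123_zero_of_odd⟩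
  rw [iCount123_zero_of_even heven, wordCount_admissible_zero, Nat.add_sub_cancel]
end

section
/- For every odd integer n ≥ 1, the number of 123-avoiding involutions of {1,2,…,n} with exactly one fixed point equals the binomial coefficient C(n, (n-1)/2); for every even n ≥ 1 this number is 0. -/
/-!
Call an index `i` of `π` *upper* if `(i, π i)` lies strictly above the antidiagonal. If `i < j` and
`π i < π j` in a 123-avoiding `π`, then `i` is not upper while `j` is, so `π` decreases along the
upper indices and along the others. If `π` is moreover an involution, it preserves the set `B` of
upper indices, hence reverses both `B` and its complement and is determined by `B`. The sets that
occur are those having, for every `i`, at least as many elements among the last `i` indices as among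
the first `i + 1`. Reading the indices in the order `0, n - 1, 1, n - 2, …`, with a down-step for an
index of the first half in `B` and for one of the second half outside `B`, turns them into the `±1`
words of length `n` without negative prefix sums, of which there are `C(n, ⌊n/2⌋)`.

The number of fixed points of an involution has the parity of `n`, and three fixed points would
form a 123; hence for odd `n` there is always exactly one.
-/

open Finset Equiv
open scoped symmDiff

theorem card_filter_add_card_filter_compl {α : Type*} [Fintype α] [DecidableEq α] (s : Finset α)
    (p : α → Prop) [DecidablePred p] : #{a ∈ s | p a} + #{a ∈ sᶜ | p a} = #{a | p a} := by
  rw [← card_union_of_disjoint (disjoint_filter_filter disjoint_compl_right), ← filter_union,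
    union_compl]

theorem strictMono_eq_id {α : Type*} [LinearOrder α] [WellFoundedLT α] [WellFoundedGT α]
    {f : α → α} (hf : StrictMono f) : f = id :=
  le_antisymm hf.le_id hf.id_le

section Reversal

variable {α : Type*} [LinearOrder α] [Fintype α]

variable (α) in
/-- The order-reversing permutation of a finite linear order. -/
def reversal : Perm α :=
  (Fintype.orderIsoFinOfCardEq α rfl).toEquiv.permCongr Fin.revPerm

theorem reversal_strictAnti : StrictAnti (reversal α) := by
  intro a b hab
  simpa [reversal] using hab

theorem eq_reversal_of_strictAnti {f : Perm α} (hf : StrictAnti f) : f = reversal α := by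
  have hinv : StrictAnti f.symm := fun a b hab => by
    rwa [← hf.lt_iff_gt, apply_symm_apply, apply_symm_apply]
  ext a
  have h : f.symm (reversal α a) = a :=
    congrFun (strictMono_eq_id (hinv.comp reversal_strictAnti)) a
  rw [← h, apply_symm_apply, h]

/-- The permutation preserving `B` that reverses the order on `B` and on its complement. -/
def reverseOn (B : Finset α) : Perm α :=
  (reversal {i // i ∈ B}).subtypeCongr (reversal {i // i ∉ B})

theorem reverseOn_mem_iff (B : Finset α) (i : α) : reverseOn B i ∈ B ↔ i ∈ B := by
  by_cases hi : i ∈ B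
  · simp only [reverseOn, Perm.subtypeCongr.left_apply _ _ hi, coe_mem, hi]
  · simp only [reverseOn, Perm.subtypeCongr.right_apply _ _ hi, hi, iff_false]
    exact (reversal {i // i ∉ B} ⟨i, hi⟩).2

theorem reverseOn_lt_reverseOn {B : Finset α} {i j : α} (hB : i ∈ B ↔ j ∈ B) (hij : i < j) :
    reverseOn B j < reverseOn B i := by
  by_cases hi : i ∈ B
  · rw [reverseOn, Perm.subtypeCongr.left_apply _ _ hi,
      Perm.subtypeCongr.left_apply _ _ (hB.1 hi)]
    exact Subtype.coe_lt_coe.2 (reversal_strictAnti (Subtype.mk_lt_mk.2 hij))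
  · rw [reverseOn, Perm.subtypeCongr.right_apply _ _ hi,
      Perm.subtypeCongr.right_apply _ _ (mt hB.2 hi)]
    exact Subtype.coe_lt_coe.2 (reversal_strictAnti (Subtype.mk_lt_mk.2 hij))

theorem eq_reverseOn {B : Finset α} {f : Perm α} (hmem : ∀ i, f i ∈ B ↔ i ∈ B)
    (hanti : ∀ i j, (i ∈ B ↔ j ∈ B) → i < j → f j < f i) : f = reverseOn B := by
  have hin : f.subtypePerm hmem = reversal {i // i ∈ B} :=
    eq_reversal_of_strictAnti fun a b hab => hanti a b (iff_of_true a.2 b.2) hab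
  have hout : f.subtypePerm (fun i => not_congr (hmem i)) = reversal {i // i ∉ B} :=
    eq_reversal_of_strictAnti fun a b hab => hanti a b (iff_of_false a.2 b.2) hab
  ext i
  by_cases hi : i ∈ B
  · rw [reverseOn, Perm.subtypeCongr.left_apply _ _ hi, ← hin, Perm.subtypePerm_apply]
  · rw [reverseOn, Perm.subtypeCongr.right_apply _ _ hi, ← hout, Perm.subtypePerm_apply]

theorem reverseOn_symm (B : Finset α) : (reverseOn B).symm = reverseOn B := by
  have hmem (i : α) : (reverseOn B).symm i ∈ B ↔ i ∈ B := by
    rw [← reverseOn_mem_iff B, apply_symm_apply]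
  refine eq_reverseOn hmem fun i j hB hij => lt_of_not_ge fun hle => ?_
  rcases hle.eq_or_lt with heq | hlt
  · exact hij.ne ((reverseOn B).symm.injective heq)
  · have := reverseOn_lt_reverseOn (by rw [hmem, hmem, hB]) hlt
    rw [apply_symm_apply, apply_symm_apply] at this
    exact this.not_gt hij

end Reversal

section Involutions

variable {n : ℕ} {π : Perm (Fin n)} {B : Finset (Fin n)} {i j : Fin n}

theorem reverseOn_isInvolution (B : Finset (Fin n)) : IsInvolution (reverseOn B) := fun i => by
  simpa only [reverseOn_symm] using (reverseOn B).symm_apply_apply i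

theorem reverseOn_avoids123 (B : Finset (Fin n)) : Avoids123 (reverseOn B) := by
  rintro ⟨i, j, k, hij, hjk, hlt_ij, hlt_jk⟩
  by_cases h₁ : i ∈ B ↔ j ∈ B
  · exact lt_asymm hlt_ij (reverseOn_lt_reverseOn h₁ hij)
  by_cases h₂ : j ∈ B ↔ k ∈ B
  · exact lt_asymm hlt_jk (reverseOn_lt_reverseOn h₂ hjk)
  · exact lt_asymm (hlt_ij.trans hlt_jk)
      (reverseOn_lt_reverseOn (by tauto) (hij.trans hjk))

theorem Avoids123.apply_le_rev_of_ascent (h : Avoids123 π) (hij : i < j) (hlt : π i < π j) :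
    π i ≤ i.rev := by
  have hmaps : Set.MapsTo π (Iio i) (Ioi (π i)) := fun k hk => by
    simp only [coe_Iio, coe_Ioi, Set.mem_Iio, Set.mem_Ioi] at hk ⊢
    refine lt_of_not_ge fun hle => ?_
    exact h ⟨k, i, j, hk, hij, hle.lt_of_ne (π.injective.ne hk.ne), hlt⟩
  have hcard := card_le_card_of_injOn π hmaps π.injective.injOn
  rw [Fin.card_Iio, Fin.card_Ioi] at hcard
  rw [Fin.le_def, Fin.val_rev]
  lia

theorem Avoids123.rev_lt_apply_of_ascent (h : Avoids123 π) (hij : i < j) (hlt : π i < π j) :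
    j.rev < π j := by
  have hmaps : Set.MapsTo π (insert i (Ioi j) : Finset (Fin n)) (Iio (π j)) := fun k hk => by
    simp only [coe_insert, coe_Iio, coe_Ioi, Set.mem_insert_iff, Set.mem_Iio, Set.mem_Ioi] at hk ⊢
    rcases hk with rfl | hk
    · exact hlt
    refine lt_of_not_ge fun hle => ?_
    exact h ⟨i, j, k, hij, hk, hlt, hle.lt_of_ne (π.injective.ne hk.ne)⟩
  have hcard := card_le_card_of_injOn π hmaps π.injective.injOn
  rw [card_insert_of_notMem (by simpa using hij.le), Fin.card_Iio, Fin.card_Ioi] at hcard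
  rw [Fin.lt_def, Fin.val_rev]
  lia

/-- The set of indices `i` for which the entry `(i, π i)` of the permutation matrix of `π` lies
strictly above the antidiagonal. -/
def upperIndices (π : Perm (Fin n)) : Finset (Fin n) :=
  {i | i.rev < π i}

theorem mem_upperIndices : i ∈ upperIndices π ↔ i.rev < π i := by
  simp only [upperIndices, mem_filter_univ]

theorem IsInvolution.apply_mem_upperIndices_iff (h : IsInvolution π) (i : Fin n) :
    π i ∈ upperIndices π ↔ i ∈ upperIndices π := by
  rw [mem_upperIndices, mem_upperIndices, h, Fin.rev_lt_iff]

theorem Avoids123.apply_lt_apply (h : Avoids123 π)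
    (hB : i ∈ upperIndices π ↔ j ∈ upperIndices π) (hij : i < j) : π j < π i := by
  refine lt_of_not_ge fun hle => ?_
  have hlt : π i < π j := hle.lt_of_ne (π.injective.ne hij.ne)
  rw [mem_upperIndices, mem_upperIndices] at hB
  exact (h.apply_le_rev_of_ascent hij hlt).not_gt (hB.2 (h.rev_lt_apply_of_ascent hij hlt))

theorem reverseOn_upperIndices (hinv : IsInvolution π) (havoid : Avoids123 π) :
    reverseOn (upperIndices π) = π :=
  (eq_reverseOn hinv.apply_mem_upperIndices_iff fun _ _ => havoid.apply_lt_apply).symm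

/-- The property characterising the sets of upper indices of involutions: every initial segment of
`Fin n` contains at most as many elements of `B` as the final segment that is one shorter. -/
def IsTopHeavy (B : Finset (Fin n)) : Prop :=
  ∀ i : Fin n, #{j ∈ B | j ≤ i} ≤ #{j ∈ B | i.rev < j}

theorem IsInvolution.isTopHeavy_upperIndices (h : IsInvolution π) :
    IsTopHeavy (upperIndices π) := by
  refine fun i => card_le_card_of_injOn π (fun j hj => ?_) π.injective.injOn
  simp only [coe_filter, Set.mem_ofPred_eq] at hj ⊢
  exact ⟨(h.apply_mem_upperIndices_iff j).2 hj.1,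
    (Fin.rev_le_rev.2 hj.2).trans_lt (mem_upperIndices.1 hj.1)⟩

theorem IsTopHeavy.rev_lt_reverseOn (h : IsTopHeavy B) (hi : i ∈ B) :
    i.rev < reverseOn B i := by
  refine lt_of_not_ge fun hle => ?_
  have hmaps : Set.MapsTo (reverseOn B) ({j ∈ B | i.rev < j} : Finset (Fin n))
      ({j ∈ B | j < i} : Finset (Fin n)) := fun j hj => by
    simp only [coe_filter, Set.mem_ofPred_eq] at hj ⊢
    refine ⟨(reverseOn_mem_iff B j).2 hj.1, ?_⟩
    have := reverseOn_lt_reverseOn (iff_of_true ((reverseOn_mem_iff B i).2 hi) hj.1)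
      (hle.trans_lt hj.2)
    rwa [reverseOn_isInvolution B i] at this
  have hle_card := card_le_card_of_injOn _ hmaps (reverseOn B).injective.injOn
  have hlt_card : #{j ∈ B | j < i} < #{j ∈ B | j ≤ i} :=
    card_lt_card <| (ssubset_iff_of_subset
      (monotone_filter_right B fun _ _ hj => le_of_lt hj)).2 ⟨i, by simp [hi]⟩
  exact (h i).not_gt (hle_card.trans_lt hlt_card)

theorem IsTopHeavy.reverseOn_le_rev (h : IsTopHeavy B) (hi : i ∉ B) :
    reverseOn B i ≤ i.rev := by
  refine le_of_not_gt fun hlt => ?_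
  have hmaps : Set.MapsTo (reverseOn B) ({j ∈ Bᶜ | j ≤ i} : Finset (Fin n))
      ({j ∈ Bᶜ | i.rev < j} : Finset (Fin n)) := fun j hj => by
    simp only [coe_filter, Set.mem_ofPred_eq, mem_compl] at hj ⊢
    refine ⟨mt (reverseOn_mem_iff B j).1 hj.1, hlt.trans_le ?_⟩
    rcases hj.2.eq_or_lt with rfl | hji
    · exact le_rfl
    · exact (reverseOn_lt_reverseOn (iff_of_false hj.1 hi) hji).le
  have hle_card := card_le_card_of_injOn _ hmaps (reverseOn B).injective.injOn
  have hinit := card_filter_add_card_filter_compl B (· ≤ i)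
  have hfinal := card_filter_add_card_filter_compl B (i.rev < ·)
  rw [filter_ge_eq_Iic, Fin.card_Iic] at hinit
  rw [filter_lt_eq_Ioi, Fin.card_Ioi, Fin.val_rev] at hfinal
  have := h i
  lia

theorem IsTopHeavy.upperIndices_reverseOn (h : IsTopHeavy B) :
    upperIndices (reverseOn B) = B := by
  ext i
  rw [mem_upperIndices]
  exact ⟨fun hlt => by_contra fun hi => (h.reverseOn_le_rev hi).not_gt hlt, h.rev_lt_reverseOn⟩

/-- A 123-avoiding involution corresponds to its set of upper indices. -/
def involutionEquivTopHeavy (n : ℕ) :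
    {π : Perm (Fin n) // IsInvolution π ∧ Avoids123 π} ≃ {B : Finset (Fin n) // IsTopHeavy B} where
  toFun π := ⟨upperIndices π.1, π.2.1.isTopHeavy_upperIndices⟩
  invFun B := ⟨reverseOn B.1, reverseOn_isInvolution B.1, reverseOn_avoids123 B.1⟩
  left_inv π := Subtype.ext (reverseOn_upperIndices π.2.1 π.2.2)
  right_inv B := Subtype.ext B.2.upperIndices_reverseOn

end Involutions

section Ballot

/-- The ballot condition on a finite set `D` of naturals: the word with a down-step at the positions
in `D` and an up-step at the others has no negative prefix sum. It is only imposed at the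
down-steps, which implies it everywhere. -/
def IsBallot (D : Finset ℕ) : Prop :=
  ∀ x ∈ D, 2 * #{y ∈ D | y < x} < x

theorem IsBallot.two_mul_card_filter_lt_le {D : Finset ℕ} (h : IsBallot D) (t : ℕ) :
    2 * #{x ∈ D | x < t} ≤ t := by
  rcases ({x ∈ D | x < t}).eq_empty_or_nonempty with hempty | hne
  · simp [hempty]
  obtain ⟨x, hx, hmax⟩ := exists_max_image _ id hne
  have hsub : ({y ∈ D | y < t} : Finset ℕ) ⊆ insert x ({y ∈ D | y < x} : Finset ℕ) := fun y hy => by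
    have := hmax y hy
    simp only [mem_insert, mem_filter, id_eq] at *
    lia
  have hcard := (card_le_card hsub).trans (card_insert_le _ _)
  have := h x (mem_filter.1 hx).1
  have := (mem_filter.1 hx).2
  lia

theorem IsBallot.two_mul_card_le {D : Finset ℕ} {n : ℕ} (h : IsBallot D) (hD : D ⊆ range n) :
    2 * #D ≤ n := by
  have := h.two_mul_card_filter_lt_le n
  rwa [filter_true_of_mem fun x hx => mem_range.1 (hD hx)] at this

theorem isBallot_insert_iff {D : Finset ℕ} {n : ℕ} (hD : D ⊆ range n) :
    IsBallot (insert n D) ↔ IsBallot D ∧ 2 * #D < n := by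
  have hfilter {x : ℕ} (hx : x ≤ n) :
      ({y ∈ insert n D | y < x} : Finset ℕ) = {y ∈ D | y < x} := by
    rw [filter_insert, if_neg hx.not_gt]
  have hlt {x : ℕ} (hx : x ∈ D) : x < n := mem_range.1 (hD hx)
  have hall : ({y ∈ D | y < n} : Finset ℕ) = D := filter_true_of_mem fun _ => hlt
  rw [IsBallot, forall_mem_insert, hfilter le_rfl, hall, and_comm]
  exact and_congr_left fun _ => forall₂_congr fun x hx => by rw [hfilter (hlt hx).le]

open scoped Classical in
/-- The ballot words of length `n` with at most `d` down-steps, encoded by the sets of positions of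
their down-steps. -/
noncomputable def ballotSets (n d : ℕ) : Finset (Finset ℕ) :=
  {D ∈ (range n).powerset | IsBallot D ∧ #D ≤ d}

theorem mem_ballotSets {n d : ℕ} {D : Finset ℕ} :
    D ∈ ballotSets n d ↔ D ⊆ range n ∧ IsBallot D ∧ #D ≤ d := by
  simp only [ballotSets, mem_filter, mem_powerset]

theorem ballotSets_zero_right (n : ℕ) : ballotSets n 0 = {∅} := by
  ext D
  rw [mem_ballotSets, mem_singleton, Nat.le_zero, card_eq_zero]
  refine ⟨fun h => h.2.2, ?_⟩
  rintro rfl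
  exact ⟨empty_subset _, by simp [IsBallot], rfl⟩

theorem ballotSets_succ_right_of_lt {n d : ℕ} (h : n < 2 * (d + 1)) :
    ballotSets n (d + 1) = ballotSets n d := by
  ext D
  rw [mem_ballotSets, mem_ballotSets]
  refine and_congr_right fun hD => and_congr_right fun hballot => ?_
  have := hballot.two_mul_card_le hD
  lia

theorem card_ballotSets_succ_succ {n d : ℕ} (h : 2 * d < n) :
    #(ballotSets (n + 1) (d + 1)) = #(ballotSets n (d + 1)) + #(ballotSets n d) := by
  classical
  simp only [ballotSets, card_filter]
  rw [range_add_one, sum_powerset_insert notMem_range_self]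
  refine congrArg _ (sum_congr rfl fun D hD => if_congr ?_ rfl rfl)
  rw [mem_powerset] at hD
  rw [isBallot_insert_iff hD, card_insert_of_notMem (mt (@hD n) notMem_range_self)]
  lia

theorem card_ballotSets {n d : ℕ} (h : 2 * d ≤ n) : #(ballotSets n d) = n.choose d := by
  induction n generalizing d with
  | zero =>
    obtain rfl : d = 0 := by lia
    simp [ballotSets_zero_right]
  | succ n ih =>
    rcases d with _ | d
    · simp [ballotSets_zero_right]
    have hsucc : #(ballotSets n (d + 1)) = n.choose (d + 1) := by
      rcases h.lt_or_eq with hlt | heq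
      · exact ih (by lia)
      · obtain rfl : n = 2 * d + 1 := by lia
        rw [ballotSets_succ_right_of_lt (by lia), ih (by lia), Nat.choose_symm_half]
    rw [card_ballotSets_succ_succ (by lia), hsucc, ih (by lia), Nat.choose_succ_succ, add_comm]

end Ballot

section Zigzag

variable {n : ℕ} {B : Finset (Fin n)} {i : Fin n}

/-- The place of an element of `Fin n` in the order `0, n - 1, 1, n - 2, …`. -/
def zigzag (n : ℕ) : Fin n ↪ ℕ where
  toFun j := if 2 * (j : ℕ) < n then 2 * j else 2 * j.rev + 1
  inj' j k h := by
    simp only [Fin.val_rev] at h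
    grind

theorem zigzag_apply (j : Fin n) :
    zigzag n j = if 2 * (j : ℕ) < n then 2 * (j : ℕ) else 2 * (j.rev : ℕ) + 1 := rfl

theorem map_zigzag_univ : univ.map (zigzag n) = range n := by
  refine eq_of_subset_of_card_le (fun x hx => ?_) (by simp)
  obtain ⟨j, -, rfl⟩ := mem_map.1 hx
  rw [zigzag_apply, Fin.val_rev, mem_range]
  split_ifs <;> lia

theorem zigzag_lt_iff (hi : 2 * (i : ℕ) < n) (j : Fin n) :
    zigzag n j < 2 * i + 1 ↔ j ≤ i ∨ i.rev < j := by
  rw [zigzag_apply, Fin.le_def, Fin.lt_def, Fin.val_rev, Fin.val_rev]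
  split_ifs <;> lia

/-- The down-steps of the word read off from `B` in zigzag order: the indices of the first half
of `Fin n` in `B` and those of the second half not in `B`. -/
def downSteps (B : Finset (Fin n)) : Finset ℕ :=
  (B ∆ ({j | n ≤ 2 * (j : ℕ)} : Finset (Fin n))).map (zigzag n)

theorem downSteps_injective : Function.Injective (downSteps (n := n)) :=
  (map_injective _).comp (symmDiff_left_injective _)

theorem downSteps_subset_range (B : Finset (Fin n)) : downSteps B ⊆ range n := by
  rw [← map_zigzag_univ]
  exact map_subset_map.2 (subset_univ _)

theorem exists_downSteps_eq {D : Finset ℕ} (hD : D ⊆ range n) :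
    ∃ B : Finset (Fin n), downSteps B = D := by
  rw [← map_zigzag_univ, subset_map_iff] at hD
  obtain ⟨C, -, rfl⟩ := hD
  exact ⟨C ∆ ({j | n ≤ 2 * (j : ℕ)} : Finset (Fin n)),
    by rw [downSteps, symmDiff_symmDiff_cancel_right]⟩

theorem card_downSteps_filter_lt (hi : 2 * (i : ℕ) < n) :
    #{x ∈ downSteps B | x < 2 * (i : ℕ) + 1} + #{j ∈ B | i.rev < j} = #{j ∈ B | j ≤ i} + i := by
  have hsplit : #{x ∈ downSteps B | x < 2 * (i : ℕ) + 1}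
      = #{j ∈ B | j ≤ i} + #{j ∈ Bᶜ | i.rev < j} := by
    rw [downSteps, filter_map, card_map, ← card_union_of_disjoint
      (disjoint_filter_filter disjoint_compl_right)]
    congr 1
    ext j
    simp only [mem_filter, mem_union, mem_symmDiff, mem_compl, mem_univ, true_and,
      Function.comp_apply, zigzag_lt_iff hi, Fin.le_def, Fin.lt_def, Fin.val_rev]
    grind
  have hfinal := card_filter_add_card_filter_compl B (i.rev < ·)
  rw [filter_lt_eq_Ioi, Fin.card_Ioi, Fin.val_rev] at hfinal
  lia

theorem card_initial_le_card_final_iff_rev :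
    #{j ∈ B | j ≤ i} ≤ #{j ∈ B | i.rev < j} ↔
      #{j ∈ B | j ≤ i.rev} ≤ #{j ∈ B | i.rev.rev < j} := by
  have hi := card_filter_add_card_filter_not (s := B) (· ≤ i)
  have hrev := card_filter_add_card_filter_not (s := B) (· ≤ i.rev)
  simp only [not_le] at hi hrev
  rw [Fin.rev_rev]
  lia

theorem isTopHeavy_iff_card_downSteps_le :
    IsTopHeavy B ↔ ∀ i : Fin n, 2 * (i : ℕ) < n → #{x ∈ downSteps B | x < 2 * (i : ℕ) + 1} ≤ i := by
  have hiff {i : Fin n} (hi : 2 * (i : ℕ) < n) :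
      #{j ∈ B | j ≤ i} ≤ #{j ∈ B | i.rev < j} ↔ #{x ∈ downSteps B | x < 2 * (i : ℕ) + 1} ≤ i := by
    have := card_downSteps_filter_lt (B := B) hi
    lia
  refine ⟨fun h i hi => (hiff hi).1 (h i), fun h i => ?_⟩
  rcases lt_or_ge (2 * (i : ℕ)) n with hi | hi
  · exact (hiff hi).2 (h i hi)
  · have hi' : 2 * (i.rev : ℕ) < n := by
      rw [Fin.val_rev]
      lia
    exact card_initial_le_card_final_iff_rev.2 ((hiff hi').2 (h i.rev hi'))

theorem isBallot_downSteps_iff : IsBallot (downSteps B) ↔ IsTopHeavy B := by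
  rw [isTopHeavy_iff_card_downSteps_le]
  refine ⟨fun h i _ => ?_, fun h x hx => ?_⟩
  · have := h.two_mul_card_filter_lt_le (2 * i + 1)
    lia
  have hxn : x < n := mem_range.1 (downSteps_subset_range B hx)
  have hhalf := h ⟨x / 2, by lia⟩ (by simp only; lia)
  simp only at hhalf
  rcases x.even_or_odd' with ⟨s, rfl | rfl⟩
  · have hsub : insert (2 * s) ({y ∈ downSteps B | y < 2 * s} : Finset ℕ)
        ⊆ ({y ∈ downSteps B | y < 2 * s + 1} : Finset ℕ) := by grind
    have hcard := card_le_card hsub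
    rw [card_insert_of_notMem (by simp)] at hcard
    rw [show 2 * s / 2 = s by lia] at hhalf
    lia
  · rw [show (2 * s + 1) / 2 = s by lia] at hhalf
    lia

theorem image_downSteps_isTopHeavy :
    downSteps '' {B : Finset (Fin n) | IsTopHeavy B} = ballotSets n (n / 2) := by
  ext D
  rw [Set.mem_image, mem_coe, mem_ballotSets]
  constructor
  · rintro ⟨B, hB, rfl⟩
    have hD := downSteps_subset_range B
    have hballot := isBallot_downSteps_iff.2 hB
    have := hballot.two_mul_card_le hD
    exact ⟨hD, hballot, by lia⟩
  · rintro ⟨hD, hballot, -⟩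
    obtain ⟨B, rfl⟩ := exists_downSteps_eq hD
    exact ⟨B, isBallot_downSteps_iff.1 hballot, rfl⟩

theorem ncard_isTopHeavy (n : ℕ) :
    {B : Finset (Fin n) | IsTopHeavy B}.ncard = n.choose (n / 2) := by
  rw [← Set.ncard_image_of_injective _ downSteps_injective, image_downSteps_isTopHeavy,
    Set.ncard_coe_finset, card_ballotSets (by lia)]

end Zigzag

theorem card_involution_avoids123 (n : ℕ) :
    Nat.card {π : Perm (Fin n) // IsInvolution π ∧ Avoids123 π} = n.choose (n / 2) := by
  rw [Nat.card_congr (involutionEquivTopHeavy n), ← ncard_isTopHeavy]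
  rfl

section FixedPoints

variable {n : ℕ} {π : Perm (Fin n)}

theorem IsInvolution.fixedPts_modEq (h : IsInvolution π) : fixedPts π ≡ n [MOD 2] := by
  have hsq : π ^ 2 ^ 1 = 1 := by
    ext i
    simp [pow_two, h i]
  have hfix : fixedPts π = #π.supportᶜ := by
    rw [fixedPts]
    congr 1
    ext i
    simp
  simpa only [hfix, Fintype.card_fin] using Perm.card_compl_support_modEq hsq

theorem Avoids123.fixedPts_le_two (h : Avoids123 π) : fixedPts π ≤ 2 := by
  by_contra! hlt
  obtain ⟨t, ht, hcard⟩ := exists_subset_card_eq (Nat.succ_le_of_lt hlt)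
  let e := t.orderEmbOfFin hcard
  have hfix (k : Fin 3) : π (e k) = e k :=
    (mem_filter.1 (ht (t.orderEmbOfFin_mem hcard k))).2
  have h01 : e 0 < e 1 := e.strictMono (by decide)
  have h12 : e 1 < e 2 := e.strictMono (by decide)
  exact h ⟨e 0, e 1, e 2, h01, h12, by rwa [hfix, hfix], by rwa [hfix, hfix]⟩

theorem IsInvolution.fixedPts_eq_one (hinv : IsInvolution π) (havoid : Avoids123 π) (hn : Odd n) :
    fixedPts π = 1 := by
  have hmod : fixedPts π % 2 = n % 2 := hinv.fixedPts_modEq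
  have := havoid.fixedPts_le_two
  rw [Nat.odd_iff.1 hn] at hmod
  lia

end FixedPoints

/-- For every odd `n ≥ 1`, the number of 123-avoiding involutions of `{1, …, n}` with
exactly one fixed point equals `C(n, (n-1)/2)`; for every even `n ≥ 1` it is `0`. -/
theorem statement2 (n : ℕ) (hn : 1 ≤ n) :
    (Odd n → iCount123 n 1 = n.choose ((n - 1) / 2)) ∧
    (Even n → iCount123 n 1 = 0) := by
  refine ⟨fun hodd => ?_, fun heven => ?_⟩
  · have hfix (π : Perm (Fin n)) :
        IsInvolution π ∧ Avoids123 π ∧ fixedPts π = 1 ↔ IsInvolution π ∧ Avoids123 π :=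
      ⟨fun h => ⟨h.1, h.2.1⟩, fun h => ⟨h.1, h.2, h.1.fixedPts_eq_one h.2 hodd⟩⟩
    have hhalf : n / 2 = (n - 1) / 2 := by
      obtain ⟨m, rfl⟩ := hodd
      lia
    rw [iCount123, Nat.card_congr (Equiv.subtypeEquivRight hfix), card_involution_avoids123,
      hhalf]
  · rw [iCount123, Nat.card_eq_zero]
    refine .inl ⟨fun ⟨π, hinv, _, hfix⟩ => ?_⟩
    have hmod : fixedPts π % 2 = n % 2 := hinv.fixedPts_modEq
    rw [hfix, Nat.even_iff.1 heven] at hmod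
    exact one_ne_zero hmod
end

section
/- For all integers n ≥ 1 and 0 ≤ k ≤ n with n + k even, the number of 321-avoiding involutions of {1,2,…,n} with exactly k fixed points equals ((k+1)/(n+1))·C(n+1, (n-k)/2), i.e. (n+1)·i_n^k(321) = (k+1)·C(n+1, (n-k)/2); when n + k is odd this number is 0. -/
/-- A permutation of `Fin n` avoids the pattern 321. -/
def Avoids321 {n : ℕ} (π : Equiv.Perm (Fin n)) : Prop :=
  ¬ ∃ i₁ i₂ i₃ : Fin n, i₁ < i₂ ∧ i₂ < i₃ ∧ (π i₃ < π i₂ ∧ π i₂ < π i₁)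

/-- `i_n^k(321)`: the number of 321-avoiding involutions of `{1, …, n}` with exactly
`k` fixed points. -/
noncomputable def iCount321 (n k : ℕ) : ℕ :=
  Nat.card {π : Equiv.Perm (Fin n) // IsInvolution π ∧ Avoids321 π ∧ fixedPts π = k}

/-!
An involution avoids 321 exactly when its weak excedances are left-to-right maxima: reading from
left to right, the arcs are closed in the order in which they were opened, and no fixed point lies
under an arc. Build such an involution by scanning its points in increasing order, while keeping a
queue of fixed points that are to be matched later. A new point either closes the arc opened by
the head of the queue, which lowers the number `m` of currently fixed points by one, or is fixed
for now, which raises `m` by one; in the latter case it must join the queue unless the queue is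
empty. Hence the number of partial involutions with a queue of length `h ≤ m` satisfies the
recurrence of the ballot numbers for every `h` at once, although the recursion changes `h`.
Taking `h = 0` gives `i_n^k(321)`, and the ballot numbers are evaluated by reflection.
-/

open Finset Equiv

/-- The ballot number: how many sequences of `n` steps `±1` lead from `0` to `m` without ever
becoming negative. -/
def ballotNumber : ℕ → ℕ → ℕ
  | 0, 0 => 1
  | 0, _ + 1 => 0
  | n + 1, 0 => ballotNumber n 1
  | n + 1, m + 1 => ballotNumber n m + ballotNumber n (m + 2)

lemma ballotNumber_eq_zero_of_odd {n m : ℕ} (h : Odd (n + m)) : ballotNumber n m = 0 := by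
  induction n, m using ballotNumber.induct with
  | case1 => simp at h
  | case2 => rfl
  | case3 n ih => exact ih (by grind)
  | case4 n m ih₁ ih₂ => rw [ballotNumber, ih₁ (by grind), ih₂ (by grind)]

-- Here `a` is the number of upward steps; the paths that become negative are, by reflection,
-- equinumerous with all paths having `a + 1` upward steps.
lemma ballotNumber_add_choose {n m a : ℕ} (h : n + m = 2 * a) :
    ballotNumber n m + n.choose (a + 1) = n.choose a := by
  induction n, m using ballotNumber.induct generalizing a with
  | case1 =>
    obtain rfl : a = 0 := by omega
    rfl
  | case2 m =>
    obtain ⟨b, rfl⟩ : ∃ b, a = b + 1 := ⟨a - 1, by omega⟩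
    rfl
  | case3 n ih =>
    obtain ⟨b, rfl⟩ : ∃ b, a = b + 1 := ⟨a - 1, by omega⟩
    have hsymm : n.choose b = n.choose (b + 1) := Nat.choose_symm_of_eq_add (by omega)
    have := ih h
    rw [ballotNumber, Nat.choose_succ_succ', Nat.choose_succ_succ']
    omega
  | case4 n m ih₁ ih₂ =>
    obtain ⟨b, rfl⟩ : ∃ b, a = b + 1 := ⟨a - 1, by omega⟩
    have h₁ := ih₁ (a := b) (by omega)
    have h₂ := ih₂ (a := b + 1) (by omega)
    rw [ballotNumber, Nat.choose_succ_succ', Nat.choose_succ_succ']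
    omega

lemma succ_mul_ballotNumber {n m a : ℕ} (h : n + m = 2 * a) (hm : m ≤ n) :
    (n + 1) * ballotNumber n m = (m + 1) * (n + 1).choose (a + 1) := by
  have hsub : (n + 1) * ballotNumber n m + (n + 1) * n.choose (a + 1) = (n + 1) * n.choose a := by
    rw [← mul_add, ballotNumber_add_choose h]
  have hup : (n + 1) * n.choose a = (n + 1).choose (a + 1) * (a + 1) :=
    Nat.add_one_mul_choose_eq n a
  have hdown : (n + 1) * n.choose (a + 1) = (n + 1).choose (a + 1) * (n - a) := by
    rw [mul_comm, Nat.choose_mul_succ_eq, Nat.add_sub_add_right]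
  have hsplit : a + 1 = (m + 1) + (n - a) := by omega
  rw [hup, hdown, hsplit, mul_add, ← hsplit] at hsub
  linarith

section MulSwap

variable {α : Type*} [DecidableEq α] {s : Finset α} {σ : Perm α} {q t : α}

lemma involutive_mul_swap (hσ : Function.Involutive σ)
    (h : swap (σ q) (σ t) = swap q t) : Function.Involutive (σ * swap q t) := by
  have hcomm (i : α) : σ (swap q t i) = swap q t (σ i) := by
    rw [← Perm.mul_apply, mul_swap_eq_swap_mul, h, Perm.mul_apply]
  intro i
  rw [Perm.mul_apply, Perm.mul_apply, hcomm, hσ, swap_apply_self]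

lemma card_filter_mul_swap_apply_eq_add_one (hq : q ∈ s)
    (hσq : σ q = q) (ht : t ∉ s) (hσt : σ t = t) :
    #{i ∈ insert t s | (σ * swap q t) i = i} + 1 = #{i ∈ s | σ i = i} := by
  have hfilter : {i ∈ insert t s | (σ * swap q t) i = i} =
      ({i ∈ s | σ i = i} : Finset α).erase q := by
    ext i
    grind [Perm.mul_apply]
  have hqmem : q ∈ ({i ∈ s | σ i = i} : Finset α) := mem_filter.2 ⟨hq, hσq⟩
  rw [hfilter, card_erase_add_one hqmem]

lemma card_filter_insert_apply_eq (ht : t ∉ s) (hσt : σ t = t) :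
    #{i ∈ insert t s | σ i = i} = #{i ∈ s | σ i = i} + 1 := by
  rw [filter_insert, if_pos hσt, card_insert_of_notMem fun h => ht (mem_filter.1 h).1]

end MulSwap

section PartialInvolution

variable {α : Type*} [LinearOrder α]

/-- A partially built 321-avoiding involution: `σ` is an involution supported in `s`, and the fixed
points in `P` form the queue of points that are to be matched with points above `s`. The other weak
excedances of `σ` in `s` are final; they precede the whole queue, and they are left-to-right
maxima. -/
structure IsPartialInvolution (s P : Finset α) (σ : Perm α) : Prop where
  involutive : Function.Involutive σ
  apply_of_notMem : ∀ i ∉ s, σ i = i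
  subset : P ⊆ s
  apply_of_mem : ∀ p ∈ P, σ p = p
  lt_of_mem : ∀ j ∈ s, j ∉ P → j ≤ σ j → ∀ p ∈ P, j < p
  apply_lt : ∀ j ∈ s, j ∉ P → j ≤ σ j → ∀ i < j, σ i < σ j

namespace IsPartialInvolution

variable {s P : Finset α} {σ : Perm α} {q t : α}

lemma apply_mem (H : IsPartialInvolution s P σ) {i : α} (hi : i ∈ s) : σ i ∈ s := by
  by_contra hσi
  have hfix : i = σ i := by simpa only [H.involutive i] using H.apply_of_notMem _ hσi
  exact hσi (hfix ▸ hi)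

lemma apply_lt_of_forall_lt (H : IsPartialInvolution s P σ) (ht : ∀ i ∈ s, i < t) {i : α}
    (hi : i < t) : σ i < t := by
  by_cases his : i ∈ s
  · exact ht _ (H.apply_mem his)
  · rwa [H.apply_of_notMem i his]

lemma apply_last_mem (H : IsPartialInvolution (insert t s) P σ) (hne : σ t ≠ t) : σ t ∈ s :=
  mem_of_mem_insert_of_ne (H.apply_mem (mem_insert_self t s)) hne

lemma apply_last_notMem (H : IsPartialInvolution (insert t s) P σ) (hne : σ t ≠ t) : σ t ∉ P :=
  fun hP => hne (by simpa only [H.involutive t, eq_comm] using H.apply_of_mem _ hP)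

lemma isLeast_insert_apply_last (H : IsPartialInvolution (insert t s) P σ)
    (ht : ∀ i ∈ s, i < t) (hne : σ t ≠ t) : IsLeast (insert (σ t) P : Finset α) (σ t) := by
  have hqs := H.apply_last_mem hne
  refine ⟨mem_insert_self _ _, fun p hp => ?_⟩
  rcases mem_insert.1 hp with rfl | hpP
  · exact le_rfl
  · exact (H.lt_of_mem _ (mem_insert_of_mem hqs) (H.apply_last_notMem hne)
      (by rw [H.involutive]; exact (ht _ hqs).le) p hpP).le

lemma last_mem (H : IsPartialInvolution (insert t s) P σ) (ht : ∀ i ∈ s, i < t) (hσt : σ t = t)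
    (hP : P.Nonempty) : t ∈ P := by
  by_contra htP
  obtain ⟨p, hp⟩ := hP
  have htp : t < p := H.lt_of_mem t (mem_insert_self t s) htP hσt.ge p hp
  rcases mem_insert.1 (H.subset hp) with rfl | hps
  · exact htP hp
  · exact htp.asymm (ht p hps)

lemma lt_apply_last (H : IsPartialInvolution (insert t s) P σ) (ht : ∀ i ∈ s, i < t)
    {j : α} (hj : j ∈ s) (hjP : j ∉ insert (σ t) P) (hle : j ≤ σ j) : j < σ t := by
  obtain ⟨hjq, hjP⟩ : j ≠ σ t ∧ j ∉ P := by simpa only [mem_insert, not_or] using hjP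
  by_contra! hqj
  have htσj : σ (σ t) < σ j :=
    H.apply_lt j (mem_insert_of_mem hj) hjP hle (σ t) (hqj.lt_of_ne hjq.symm)
  rw [H.involutive] at htσj
  rcases mem_insert.1 (H.apply_mem (mem_insert_of_mem hj)) with h | h
  · exact htσj.ne' h
  · exact htσj.asymm (ht _ h)

lemma reopen (H : IsPartialInvolution (insert t s) P σ) (ht : ∀ i ∈ s, i < t) (hne : σ t ≠ t) :
    IsPartialInvolution s (insert (σ t) P) (σ * swap (σ t) t) := by
  have hfix_q : (σ * swap (σ t) t) (σ t) = σ t := by rw [Perm.mul_apply, swap_apply_left]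
  have hfix_t : (σ * swap (σ t) t) t = t := by
    rw [Perm.mul_apply, swap_apply_right, H.involutive]
  have happly (i : α) (hiq : i ≠ σ t) (hit : i ≠ t) : (σ * swap (σ t) t) i = σ i := by
    rw [Perm.mul_apply, swap_apply_of_ne_of_ne hiq hit]
  have hqs : σ t ∈ s := H.apply_last_mem hne
  have htP : t ∉ P := fun h => hne (H.apply_of_mem t h)
  have happly_settled (j : α) (hj : j ∈ s) (hjP : j ∉ insert (σ t) P) :
      (σ * swap (σ t) t) j = σ j :=
    happly j (fun h => hjP (mem_insert.2 (.inl h))) (ht j hj).ne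
  exact {
    involutive := involutive_mul_swap H.involutive (by rw [H.involutive, swap_comm])
    apply_of_notMem i hi := by
      by_cases hit : i = t
      · rw [hit, hfix_t]
      · rw [happly i (ne_of_mem_of_not_mem hqs hi).symm hit, H.apply_of_notMem i (by grind)]
    subset := insert_subset hqs ((subset_insert_iff_of_notMem htP).1 H.subset)
    apply_of_mem p hp := by
      by_cases hpq : p = σ t
      · rw [hpq, hfix_q]
      · have hpP := mem_of_mem_insert_of_ne hp hpq
        rw [happly p hpq (ne_of_mem_of_not_mem hpP htP), H.apply_of_mem p hpP]
    lt_of_mem j hj hjP hle p hp := by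
      rw [happly_settled j hj hjP] at hle
      exact (H.lt_apply_last ht hj hjP hle).trans_le
        ((H.isLeast_insert_apply_last ht hne).2 hp)
    apply_lt j hj hjP hle i hij := by
      rw [happly_settled j hj hjP] at hle ⊢
      have hiq : i < σ t := hij.trans (H.lt_apply_last ht hj hjP hle)
      rw [happly i hiq.ne (hij.trans (ht j hj)).ne]
      exact H.apply_lt j (mem_insert_of_mem hj) (by grind) hle i hij }

lemma close (H : IsPartialInvolution s P σ) (ht : ∀ i ∈ s, i < t) (hq : IsLeast (P : Set α) q) :
    IsPartialInvolution (insert t s) (P.erase q) (σ * swap q t) := by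
  have hqs : q ∈ s := H.subset hq.1
  have hσq : σ q = q := H.apply_of_mem q hq.1
  have hσt : σ t = t := H.apply_of_notMem t fun h => (ht t h).false
  have happly_q : (σ * swap q t) q = t := by rw [Perm.mul_apply, swap_apply_left, hσt]
  have happly_t : (σ * swap q t) t = q := by rw [Perm.mul_apply, swap_apply_right, hσq]
  have happly (i : α) (hiq : i ≠ q) (hit : i ≠ t) : (σ * swap q t) i = σ i := by
    rw [Perm.mul_apply, swap_apply_of_ne_of_ne hiq hit]
  have hsettled (j : α) (hj : j ∈ insert t s) (hjP : j ∉ P.erase q) (hjq : j ≠ q)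
      (hle : j ≤ (σ * swap q t) j) : j ∈ s ∧ j ∉ P ∧ j ≤ σ j := by
    have hjt : j ≠ t := by
      rintro rfl
      exact (happly_t ▸ hle).not_gt (ht q hqs)
    exact ⟨mem_of_mem_insert_of_ne hj hjt, fun h => hjP (mem_erase.2 ⟨hjq, h⟩),
      happly j hjq hjt ▸ hle⟩
  exact {
    involutive := involutive_mul_swap H.involutive (by rw [hσq, hσt])
    apply_of_notMem i hi := by grind [H.apply_of_notMem i]
    subset := (erase_subset q P).trans (H.subset.trans (subset_insert t s))
    apply_of_mem p hp := by grind [H.apply_of_mem p, H.subset]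
    lt_of_mem j hj hjP hle p hp := by
      by_cases hjq : j = q
      · exact hjq ▸ (hq.2 (mem_of_mem_erase hp)).lt_of_ne (ne_of_mem_erase hp).symm
      · obtain ⟨hjs, hjP, hle⟩ := hsettled j hj hjP hjq hle
        exact H.lt_of_mem j hjs hjP hle p (mem_of_mem_erase hp)
    apply_lt j hj hjP hle i hij := by
      by_cases hjq : j = q
      · subst hjq
        rw [happly i hij.ne (hij.trans (ht j hqs)).ne, happly_q]
        exact H.apply_lt_of_forall_lt ht (hij.trans (ht j hqs))
      · obtain ⟨hjs, hjP, hle⟩ := hsettled j hj hjP hjq hle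
        have hiq : i < q := hij.trans (H.lt_of_mem j hjs hjP hle q hq.1)
        rw [happly i hiq.ne (hij.trans (ht j hjs)).ne, happly j hjq (ht j hjs).ne]
        exact H.apply_lt j hjs hjP hle i hij }

lemma erase_last (H : IsPartialInvolution (insert t s) P σ) (hσt : σ t = t) (ht : t ∉ s) :
    IsPartialInvolution s (P.erase t) σ where
  involutive := H.involutive
  apply_of_notMem i hi := by
    by_cases hit : i = t
    · rw [hit, hσt]
    · exact H.apply_of_notMem i (by grind)
  subset := by grind [H.subset]
  apply_of_mem p hp := H.apply_of_mem p (mem_of_mem_erase hp)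
  lt_of_mem j hj hjP hle p hp :=
    H.lt_of_mem j (mem_insert_of_mem hj) (by grind) hle p (mem_of_mem_erase hp)
  apply_lt j hj hjP hle := H.apply_lt j (mem_insert_of_mem hj) (by grind) hle

lemma enqueue (H : IsPartialInvolution s P σ) (ht : ∀ i ∈ s, i < t) :
    IsPartialInvolution (insert t s) (insert t P) σ where
  involutive := H.involutive
  apply_of_notMem i hi := H.apply_of_notMem i (by grind)
  subset := insert_subset_insert t H.subset
  apply_of_mem p hp := by
    rcases mem_insert.1 hp with rfl | hpP
    · exact H.apply_of_notMem p fun hps => (ht p hps).false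
    · exact H.apply_of_mem p hpP
  lt_of_mem j hj hjP hle p hp := by grind [H.lt_of_mem]
  apply_lt j hj hjP hle := H.apply_lt j (by grind) (by grind) hle

lemma insert_empty (H : IsPartialInvolution s ∅ σ) (ht : ∀ i ∈ s, i < t) :
    IsPartialInvolution (insert t s) ∅ σ where
  involutive := H.involutive
  apply_of_notMem i hi := H.apply_of_notMem i (by grind)
  subset := empty_subset _
  apply_of_mem := by simp only [notMem_empty, false_implies, implies_true]
  lt_of_mem := by simp only [notMem_empty, false_implies, implies_true]
  apply_lt j hj hjP hle i hij := by
    rcases mem_insert.1 hj with rfl | hjs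
    · rw [H.apply_of_notMem j fun hjs => (ht j hjs).false]
      exact H.apply_lt_of_forall_lt ht hij
    · exact H.apply_lt j hjs hjP hle i hij

end IsPartialInvolution

variable [Fintype α]

open Classical in
/-- The pairs `(P, σ)` of a partial involution `σ` on `s` with queue `P`, where `P` has `h` elements
and `σ` has `m` fixed points in `s`, those in `P` included. -/
noncomputable def partialInvolutions (s : Finset α) (h m : ℕ) : Finset (Finset α × Perm α) :=
  {x | IsPartialInvolution s x.1 x.2 ∧ #x.1 = h ∧ #{i ∈ s | x.2 i = i} = m}

variable {s P : Finset α} {σ : Perm α} {q t : α} {h m : ℕ}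

lemma mem_partialInvolutions : (P, σ) ∈ partialInvolutions s h m ↔
    IsPartialInvolution s P σ ∧ #P = h ∧ #{i ∈ s | σ i = i} = m := by
  simp only [partialInvolutions, mem_filter_univ]

lemma partialInvolutions_empty_zero :
    partialInvolutions (∅ : Finset α) 0 0 = {(∅, 1)} := by
  ext ⟨P, σ⟩
  simp only [mem_partialInvolutions, card_eq_zero, filter_empty, mem_singleton, Prod.mk.injEq,
    and_true]
  constructor
  · rintro ⟨H, hP⟩
    exact ⟨hP, Equiv.ext fun i => H.apply_of_notMem i (notMem_empty i)⟩
  · rintro ⟨rfl, rfl⟩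
    exact ⟨by constructor <;> simp [Function.Involutive], rfl⟩

lemma partialInvolutions_empty_succ : partialInvolutions (∅ : Finset α) h (m + 1) = ∅ := by
  ext ⟨P, σ⟩
  simp [mem_partialInvolutions]

lemma reopen_mem_partialInvolutions (hx : (P, σ) ∈ partialInvolutions (insert t s) h m)
    (ht : ∀ i ∈ s, i < t) (hne : σ t ≠ t) :
    (insert (σ t) P, σ * swap (σ t) t) ∈ partialInvolutions s (h + 1) (m + 1) := by
  obtain ⟨H, rfl, rfl⟩ := mem_partialInvolutions.1 hx
  have hts : t ∉ s := fun h => (ht t h).false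
  have H' := H.reopen ht hne
  have hcard := card_filter_mul_swap_apply_eq_add_one (H.apply_last_mem hne)
    (H'.apply_of_mem _ (mem_insert_self _ _)) hts (H'.apply_of_notMem t hts)
  rw [mul_swap_mul_self] at hcard
  exact mem_partialInvolutions.2 ⟨H', card_insert_of_notMem (H.apply_last_notMem hne), hcard.symm⟩

lemma close_mem_partialInvolutions (hx : (P, σ) ∈ partialInvolutions s (h + 1) (m + 1))
    (ht : ∀ i ∈ s, i < t) (hq : IsLeast (P : Set α) q) :
    (P.erase q, σ * swap q t) ∈ partialInvolutions (insert t s) h m := by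
  obtain ⟨H, hP, hm⟩ := mem_partialInvolutions.1 hx
  have hts : t ∉ s := fun h => (ht t h).false
  have hcard := card_filter_mul_swap_apply_eq_add_one (H.subset hq.1) (H.apply_of_mem q hq.1) hts
    (H.apply_of_notMem t hts)
  rw [hm, Nat.add_right_cancel_iff] at hcard
  refine mem_partialInvolutions.2 ⟨H.close ht hq, ?_, hcard⟩
  rw [card_erase_of_mem hq.1, hP, Nat.add_sub_cancel]

lemma card_partialInvolutions_insert_filter_ne (ht : ∀ i ∈ s, i < t) :
    #{x ∈ partialInvolutions (insert t s) h m | x.2 t ≠ t} =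
      #(partialInvolutions s (h + 1) (m + 1)) := by
  refine card_nbij (fun x => (insert (x.2 t) x.1, x.2 * swap (x.2 t) t)) ?_ ?_ ?_
  · rintro ⟨P, σ⟩ hx
    obtain ⟨hx, hne⟩ := mem_filter.1 hx
    exact reopen_mem_partialInvolutions hx ht hne
  · rintro ⟨P, σ⟩ hx ⟨Q, τ⟩ hy hxy
    obtain ⟨hx, hσ⟩ := mem_filter.1 hx
    obtain ⟨hy, hτ⟩ := mem_filter.1 hy
    have H := (mem_partialInvolutions.1 hx).1
    have K := (mem_partialInvolutions.1 hy).1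
    obtain ⟨hPQ, hστ⟩ := Prod.mk.inj hxy
    have hq : σ t = τ t := (H.isLeast_insert_apply_last ht hσ).unique
      (hPQ ▸ K.isLeast_insert_apply_last ht hτ)
    have htP : τ t ∉ P := hq ▸ H.apply_last_notMem hσ
    have htQ : τ t ∉ Q := K.apply_last_notMem hτ
    simp only [hq] at hPQ hστ
    rw [mul_right_cancel hστ, ← erase_insert htP, hPQ, erase_insert htQ]
  · rintro ⟨P, σ⟩ hx
    obtain ⟨H, hP, -⟩ := mem_partialInvolutions.1 (mem_coe.1 hx)
    have hne : P.Nonempty := card_pos.1 (by omega)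
    obtain ⟨q, hq⟩ : ∃ q, IsLeast (P : Set α) q := ⟨_, P.isLeast_min' hne⟩
    have happly_t : (σ * swap q t) t = q := by
      rw [Perm.mul_apply, swap_apply_right, H.apply_of_mem q hq.1]
    refine ⟨(P.erase q, σ * swap q t), mem_coe.2 (mem_filter.2
      ⟨close_mem_partialInvolutions hx ht hq, ?_⟩), ?_⟩
    · change (σ * swap q t) t ≠ t
      rw [happly_t]
      exact (ht q (H.subset hq.1)).ne
    · simp only [happly_t, insert_erase (mem_coe.1 hq.1), mul_swap_mul_self]

lemma card_partialInvolutions_insert_succ_filter_eq (ht : ∀ i ∈ s, i < t) :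
    #{x ∈ partialInvolutions (insert t s) (h + 1) (m + 1) | x.2 t = t} =
      #(partialInvolutions s h m) := by
  have hts : t ∉ s := fun h => (ht t h).false
  refine card_nbij' (fun x => (x.1.erase t, x.2)) (fun x => (insert t x.1, x.2)) ?_ ?_ ?_ ?_
  · rintro ⟨P, σ⟩ hx
    obtain ⟨hx, hσt⟩ := mem_filter.1 hx
    obtain ⟨H, hP, hm⟩ := mem_partialInvolutions.1 hx
    have htP := H.last_mem ht hσt (card_pos.1 (by omega))
    rw [card_filter_insert_apply_eq hts hσt, Nat.add_right_cancel_iff] at hm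
    exact mem_partialInvolutions.2 ⟨H.erase_last hσt hts, by
      rw [card_erase_of_mem htP, hP, Nat.add_sub_cancel], hm⟩
  · rintro ⟨P, σ⟩ hx
    obtain ⟨H, rfl, rfl⟩ := mem_partialInvolutions.1 hx
    have hσt := H.apply_of_notMem t hts
    exact mem_filter.2 ⟨mem_partialInvolutions.2 ⟨H.enqueue ht,
      card_insert_of_notMem fun h => hts (H.subset h), card_filter_insert_apply_eq hts hσt⟩, hσt⟩
  · rintro ⟨P, σ⟩ hx
    obtain ⟨hx, hσt⟩ := mem_filter.1 hx
    obtain ⟨H, hP, -⟩ := mem_partialInvolutions.1 hx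
    simp only [insert_erase (H.last_mem ht hσt (card_pos.1 (by omega)))]
  · rintro ⟨P, σ⟩ hx
    obtain ⟨H, -, -⟩ := mem_partialInvolutions.1 hx
    simp only [erase_insert fun h => hts (H.subset h)]

lemma partialInvolutions_insert_zero_filter_eq (ht : ∀ i ∈ s, i < t) :
    {x ∈ partialInvolutions (insert t s) 0 (m + 1) | x.2 t = t} = partialInvolutions s 0 m := by
  have hts : t ∉ s := fun h => (ht t h).false
  ext ⟨P, σ⟩
  simp only [mem_filter, mem_partialInvolutions, card_eq_zero]
  constructor
  · rintro ⟨⟨H, rfl, hm⟩, hσt⟩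
    rw [card_filter_insert_apply_eq hts hσt, Nat.add_right_cancel_iff] at hm
    exact ⟨H.erase_last hσt hts, rfl, hm⟩
  · rintro ⟨H, rfl, rfl⟩
    have hσt := H.apply_of_notMem t hts
    exact ⟨⟨H.insert_empty ht, rfl, card_filter_insert_apply_eq hts hσt⟩, hσt⟩

lemma partialInvolutions_insert_zero_right_filter_eq :
    {x ∈ partialInvolutions (insert t s) h 0 | x.2 t = t} = ∅ := by
  ext ⟨P, σ⟩
  simp only [mem_filter, mem_partialInvolutions, card_eq_zero, notMem_empty, iff_false]
  rintro ⟨⟨-, -, hm⟩, hσt⟩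
  exact filter_eq_empty_iff.1 hm (mem_insert_self t s) hσt

theorem card_partialInvolutions (hm : h ≤ m) :
    #(partialInvolutions s h m) = ballotNumber #s m := by
  induction s using Finset.induction_on_max generalizing h m with
  | empty =>
    cases m with
    | zero =>
      obtain rfl : h = 0 := by omega
      rw [partialInvolutions_empty_zero, card_singleton, card_empty, ballotNumber]
    | succ m => rw [partialInvolutions_empty_succ, card_empty, card_empty, ballotNumber]
  | insert t s ht ih =>
    rw [card_insert_of_notMem fun h => (ht t h).false,
      ← card_filter_add_card_filter_not (fun x : Finset α × Perm α => x.2 t = t),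
      card_partialInvolutions_insert_filter_ne ht, ih (by omega)]
    cases m with
    | zero =>
      rw [partialInvolutions_insert_zero_right_filter_eq, card_empty, zero_add, ballotNumber]
    | succ m =>
      rw [ballotNumber, Nat.add_right_cancel_iff]
      cases h with
      | zero => rw [partialInvolutions_insert_zero_filter_eq ht, ih (Nat.zero_le m)]
      | succ h => rw [card_partialInvolutions_insert_succ_filter_eq ht, ih (by omega)]

end PartialInvolution

lemma isPartialInvolution_univ_empty_iff {n : ℕ} {σ : Perm (Fin n)} :
    IsPartialInvolution univ ∅ σ ↔ IsInvolution σ ∧ Avoids321 σ := by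
  constructor
  · intro H
    have hmax (j : Fin n) (hle : j ≤ σ j) : ∀ i < j, σ i < σ j :=
      H.apply_lt j (mem_univ j) (notMem_empty j) hle
    refine ⟨H.involutive, ?_⟩
    rintro ⟨a, b, c, hab, hbc, hcb, hba⟩
    rcases le_total b (σ b) with hb | hb
    · exact hba.asymm (hmax b hb a hab)
    · have hbc' := hmax (σ b) (by rwa [H.involutive]) (σ c) hcb
      rw [H.involutive, H.involutive] at hbc'
      exact hbc.asymm hbc'
  · rintro ⟨hinv, havoid⟩
    refine ⟨hinv, by simp, empty_subset _, by simp, by simp, fun j _ _ hle i hij => ?_⟩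
    by_contra! hji
    have hlt : σ j < σ i := hji.lt_of_ne (σ.injective.ne hij.ne')
    exact havoid ⟨i, j, σ i, hij, hle.trans_lt hlt, by rw [hinv i]; exact hij.trans_le hle, hlt⟩

theorem iCount321_eq_ballotNumber (n k : ℕ) : iCount321 n k = ballotNumber n k := by
  classical
  have hmap : partialInvolutions (univ : Finset (Fin n)) 0 k =
      ({σ | IsInvolution σ ∧ Avoids321 σ ∧ fixedPts σ = k} : Finset (Perm (Fin n))).map
        ⟨Prod.mk ∅, Prod.mk_right_injective ∅⟩ := by
    ext ⟨P, σ⟩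
    simp only [mem_partialInvolutions, card_eq_zero, mem_map, mem_filter_univ,
      Function.Embedding.coeFn_mk, Prod.mk.injEq, exists_eq_right_right]
    constructor
    · rintro ⟨H, rfl, hk⟩
      obtain ⟨hinv, havoid⟩ := isPartialInvolution_univ_empty_iff.1 H
      exact ⟨⟨hinv, havoid, hk⟩, rfl⟩
    · rintro ⟨⟨hinv, havoid, hk⟩, rfl⟩
      exact ⟨isPartialInvolution_univ_empty_iff.2 ⟨hinv, havoid⟩, rfl, hk⟩
  calc iCount321 n k
      = #{σ : Perm (Fin n) | IsInvolution σ ∧ Avoids321 σ ∧ fixedPts σ = k} := by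
        rw [iCount321, Nat.card_eq_fintype_card, Fintype.card_subtype]
    _ = #(partialInvolutions (univ : Finset (Fin n)) 0 k) := by rw [hmap, card_map]
    _ = ballotNumber n k := by rw [card_partialInvolutions (Nat.zero_le k), card_fin]

/-- For all `n ≥ 1`, `0 ≤ k ≤ n` with `n + k` even,
`(n+1) · i_n^k(321) = (k+1) · C(n+1, (n-k)/2)`; when `n + k` is odd, `i_n^k(321) = 0`. -/
theorem statement4 (n k : ℕ) (hn : 1 ≤ n) (hk : k ≤ n) :
    (Even (n + k) → (n + 1) * iCount321 n k = (k + 1) * (n + 1).choose ((n - k) / 2)) ∧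
    (Odd (n + k) → iCount321 n k = 0) := by
  rw [iCount321_eq_ballotNumber]
  refine ⟨?_, ballotNumber_eq_zero_of_odd⟩
  rintro ⟨a, ha⟩
  have hsymm : (n + 1).choose ((n - k) / 2) = (n + 1).choose (a + 1) :=
    Nat.choose_symm_of_eq_add (by omega)
  rw [hsymm, succ_mul_ballotNumber (a := a) (by omega) hk]
end

section
/- For all integers n ≥ 1 and 0 ≤ k ≤ n, the number of 132-avoiding involutions of {1,…,n} with exactly k fixed points, the number of 213-avoiding involutions of {1,…,n} with exactly k fixed points, and the number of 321-avoiding involutions of {1,…,n} with exactly k fixed points are all equal: i_n^k(132) = i_n^k(213) = i_n^k(321). -/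
/-- A permutation of `Fin n` avoids the pattern 132. -/
def Avoids132 {n : ℕ} (π : Equiv.Perm (Fin n)) : Prop :=
  ¬ ∃ i₁ i₂ i₃ : Fin n, i₁ < i₂ ∧ i₂ < i₃ ∧ (π i₁ < π i₃ ∧ π i₃ < π i₂)

/-- A permutation of `Fin n` avoids the pattern 213. -/
def Avoids213 {n : ℕ} (π : Equiv.Perm (Fin n)) : Prop :=
  ¬ ∃ i₁ i₂ i₃ : Fin n, i₁ < i₂ ∧ i₂ < i₃ ∧ (π i₂ < π i₁ ∧ π i₁ < π i₃)

/-- `i_n^k(132)`: the number of 132-avoiding involutions of `{1, …, n}` with exactly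
`k` fixed points. -/
noncomputable def iCount132 (n k : ℕ) : ℕ :=
  Nat.card {π : Equiv.Perm (Fin n) // IsInvolution π ∧ Avoids132 π ∧ fixedPts π = k}

/-- `i_n^k(213)`: the number of 213-avoiding involutions of `{1, …, n}` with exactly
`k` fixed points. -/
noncomputable def iCount213 (n k : ℕ) : ℕ :=
  Nat.card {π : Equiv.Perm (Fin n) // IsInvolution π ∧ Avoids213 π ∧ fixedPts π = k}

/-! Each of the three counts equals the number of walks of length `n` on `ℕ` with steps `±1` from
`k` to `0`. The case `213` reduces to `132`, because conjugating by `i ↦ n + 1 - i` preserves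
involutions and their number of fixed points and exchanges the two patterns.

In a `132`-avoiding involution with `c` 2-cycles the positions `i` with `i < π i` are the first `c`
ones; consider the next position, `c + 1`. If it is fixed, deleting it leaves a `132`-avoiding
involution of `n - 1` points with one fixed point less. Otherwise, cutting the 2-cycle of position
`c` into two fixed points yields a `132`-avoiding involution with two more fixed points, now with
position `c` in the special role and fixed; the cut is undone by linking `c` to the next fixed
point on its right. Deleting `c` then leaves `n - 1` points and one fixed point more than at the
start.

An involution avoids `321` iff it has no 2-cycle nested in another one and no fixed point below a
2-cycle. Read its positions from right to left and consider the last position not yet known to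
close a 2-cycle. If it does not close one either, it is a fixed point at the very end, which can be
deleted, or it opens the 2-cycle closed by the last position, and this 2-cycle can be deleted.
Both steps together are again the recursion of the walks, whose height is the number of fixed
points plus the number of closing positions already read. -/

section Transfer

variable {α β : Type*}

theorem exists_perm_semiconj [Finite α] (e : α ↪ β) (π : Equiv.Perm β)
    (h : ∀ a, π (e a) ∈ Set.range e) : ∃ σ : Equiv.Perm α, Function.Semiconj e σ π := by
  choose σ hσ using h
  have hσ_inj : Function.Injective σ := fun a a' haa' ↦
    e.injective (π.injective (by rw [← hσ, ← hσ, haa']))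
  exact ⟨Equiv.ofBijective σ (Finite.injective_iff_bijective.1 hσ_inj), hσ⟩

theorem ncard_inter_extensions [Finite α] (e : α ↪ β) (ρ : Equiv.Perm β) (hρ : ∀ a, ρ (e a) = e a)
    {S : Set (Equiv.Perm α)} {T : Set (Equiv.Perm β)}
    (h : ∀ (σ : Equiv.Perm α) (π : Equiv.Perm β), Function.Semiconj e σ π →
      (∀ b ∉ Set.range e, π b = ρ b) → (π ∈ T ↔ σ ∈ S)) :
    (T ∩ {π | ∀ b ∉ Set.range e, π b = ρ b}).ncard = S.ncard := by
  set extend : Equiv.Perm α → Equiv.Perm β := fun σ ↦ ρ * σ.viaEmbedding e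
  have semiconj_extend (σ : Equiv.Perm α) : Function.Semiconj e σ (extend σ) := fun a ↦ by
    simp [extend, Equiv.Perm.viaEmbedding_apply, hρ]
  have extend_eq (σ : Equiv.Perm α) : ∀ b ∉ Set.range e, extend σ b = ρ b := fun b hb ↦ by
    simp [extend, Equiv.Perm.viaEmbedding_apply_of_notMem _ _ _ hb]
  have extend_injective : Function.Injective extend :=
    (mul_right_injective ρ).comp (Equiv.Perm.viaEmbeddingHom_injective e)
  rw [← Set.ncard_image_of_injective S extend_injective]
  congr 1
  ext π
  refine ⟨fun ⟨hπT, hπ⟩ ↦ ?_, ?_⟩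
  · have maps_range (a : α) : π (e a) ∈ Set.range e := by
      by_contra hout
      have hpre : ρ.symm (π (e a)) ∉ Set.range e := by
        rintro ⟨a', ha'⟩
        exact hout ⟨a', by rw [← hρ, ha', Equiv.apply_symm_apply]⟩
      exact hpre ⟨a, π.injective (by rw [hπ _ hpre, Equiv.apply_symm_apply])⟩
    obtain ⟨σ, hσ⟩ := exists_perm_semiconj e π maps_range
    refine ⟨σ, (h σ π hσ hπ).1 hπT, Equiv.ext fun b ↦ ?_⟩
    by_cases hb : b ∈ Set.range e
    · obtain ⟨a, rfl⟩ := hb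
      exact (semiconj_extend σ a).symm.trans (hσ a)
    · rw [extend_eq σ b hb, hπ b hb]
  · rintro ⟨σ, hσ, rfl⟩
    exact ⟨(h σ _ (semiconj_extend σ) (extend_eq σ)).2 hσ, extend_eq σ⟩

theorem ncard_inter_fixed {n : ℕ} (x : Fin (n + 1)) {S : Set (Equiv.Perm (Fin n))}
    {T : Set (Equiv.Perm (Fin (n + 1)))}
    (h : ∀ (σ : Equiv.Perm (Fin n)) (π : Equiv.Perm (Fin (n + 1))),
      Function.Semiconj x.succAbove σ π → π x = x → (π ∈ T ↔ σ ∈ S)) :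
    (T ∩ {π | π x = x}).ncard = S.ncard := by
  have hcompl (π : Equiv.Perm (Fin (n + 1))) :
      (∀ b ∉ Set.range x.succAboveEmb, π b = Equiv.refl _ b) ↔ π x = x := by
    simp [Fin.range_succAbove]
  have hncard := ncard_inter_extensions x.succAboveEmb (Equiv.refl _) (fun _ ↦ rfl)
    fun σ π hσπ hout ↦ h σ π hσπ ((hcompl π).1 hout)
  simpa only [hcompl] using hncard

end Transfer

section Involutions

variable {m n : ℕ} {σ : Equiv.Perm (Fin m)} {π : Equiv.Perm (Fin n)}

theorem isInvolution_iff_of_semiconj (e : Fin m ↪ Fin n) (h : Function.Semiconj e σ π)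
    (hout : ∀ b ∉ Set.range e, π (π b) = b) : IsInvolution π ↔ IsInvolution σ := by
  refine ⟨fun hπ i ↦ e.injective (by rw [h, h, hπ]), fun hσ b ↦ ?_⟩
  by_cases hb : b ∈ Set.range e
  · obtain ⟨a, rfl⟩ := hb
    rw [← h, ← h, hσ]
  · exact hout b hb

open Classical in
theorem fixedPts_eq_of_semiconj (e : Fin m ↪ Fin n) (h : Function.Semiconj e σ π) :
    fixedPts π = fixedPts σ + (Finset.univ.filter fun b ↦ b ∉ Set.range e ∧ π b = b).card := by
  have hsplit : (Finset.univ.filter fun b ↦ π b = b) =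
      (Finset.univ.filter fun a ↦ σ a = a).map e ∪
        Finset.univ.filter fun b ↦ b ∉ Set.range e ∧ π b = b := by
    ext b
    by_cases hb : b ∈ Set.range e
    · obtain ⟨a, rfl⟩ := hb
      simp [← h a]
    · have : ∀ a, e a ≠ b := fun a ha ↦ hb ⟨a, ha⟩
      simp [this]
  rw [fixedPts, hsplit, Finset.card_union_of_disjoint, Finset.card_map, fixedPts]
  rw [Finset.disjoint_left]
  simp only [Finset.mem_map, Finset.mem_filter, Finset.mem_univ, true_and]
  rintro _ ⟨a, -, rfl⟩ ⟨hb, -⟩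
  exact hb ⟨a, rfl⟩

theorem isInvolution_iff_of_semiconj_succAbove {x : Fin (n + 1)} {τ : Equiv.Perm (Fin (n + 1))}
    (h : Function.Semiconj x.succAbove π τ) (hx : τ x = x) : IsInvolution τ ↔ IsInvolution π :=
  isInvolution_iff_of_semiconj x.succAboveEmb h (by simp [Fin.range_succAbove, hx])

theorem fixedPts_eq_of_semiconj_succAbove {x : Fin (n + 1)} {τ : Equiv.Perm (Fin (n + 1))}
    (h : Function.Semiconj x.succAbove π τ) (hx : τ x = x) : fixedPts τ = fixedPts π + 1 := by
  rw [fixedPts_eq_of_semiconj x.succAboveEmb h, Nat.add_left_cancel_iff, Finset.card_eq_one]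
  refine ⟨x, Finset.ext fun b ↦ ?_⟩
  simp +contextual [Fin.range_succAbove, hx]

theorem IsInvolution.two_mul_card_excedances_add_fixedPts (hI : IsInvolution π) :
    2 * (Finset.univ.filter fun i ↦ i < π i).card + fixedPts π = n := by
  have hdeficiencies : (Finset.univ.filter fun i ↦ π i < i).card =
      (Finset.univ.filter fun i ↦ i < π i).card :=
    Finset.card_equiv π fun i ↦ by simp [hI i]
  have htrichotomy : (Finset.univ.filter fun i ↦ i < π i).card +
      (Finset.univ.filter fun i ↦ π i < i).card + fixedPts π = n := by
    simp only [fixedPts, Finset.card_filter, ← Finset.sum_add_distrib]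
    rw [Finset.sum_congr rfl (g := fun _ ↦ 1) (fun i _ ↦ by grind)]
    simp
  omega

theorem apply_ne_of_fixedPts_eq_zero (h : fixedPts π = 0) (i : Fin n) : π i ≠ i := by
  rw [fixedPts, Finset.card_eq_zero, Finset.filter_eq_empty_iff] at h
  exact h (Finset.mem_univ i)

theorem apply_eq_of_fixedPts_eq (h : fixedPts π = n) (i : Fin n) : π i = i := by
  have huniv := (Finset.card_eq_iff_eq_univ _).1 (h.trans (Fintype.card_fin n).symm)
  exact Finset.filter_eq_self.1 huniv i (Finset.mem_univ i)

theorem isInvolution_swap_mul_iff {x p : Fin n} (hx : π x = x) (hp : π p = p) :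
    IsInvolution (Equiv.swap x p * π) ↔ IsInvolution π := by
  have hcomm : Commute (Equiv.swap x p) π := by
    rw [commute_iff_eq, Equiv.mul_swap_eq_swap_mul, hx, hp]
  have hsq : (Equiv.swap x p * π) * (Equiv.swap x p * π) = π * π := by
    rw [mul_assoc, ← mul_assoc π, ← hcomm.eq, mul_assoc, Equiv.swap_mul_self_mul]
  simp only [IsInvolution, ← Equiv.Perm.mul_apply, hsq]

theorem fixedPts_swap_mul_add_two {x p : Fin n} (hxp : x ≠ p) (hx : π x = x) (hp : π p = p) :
    fixedPts (Equiv.swap x p * π) + 2 = fixedPts π := by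
  have hset : (Finset.univ.filter fun i ↦ π i = i) =
      insert x (insert p (Finset.univ.filter fun i ↦ (Equiv.swap x p * π) i = i)) := by
    ext i
    have := π.injective.eq_iff (a := i) (b := x)
    have := π.injective.eq_iff (a := i) (b := p)
    simp only [Finset.mem_filter, Finset.mem_univ, true_and, Finset.mem_insert,
      Equiv.Perm.mul_apply, Equiv.swap_apply_def]
    grind
  rw [fixedPts, fixedPts, hset, Finset.card_insert_of_notMem, Finset.card_insert_of_notMem]
  · rw [Finset.mem_filter_univ, Equiv.Perm.mul_apply, hp, Equiv.swap_apply_right]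
    exact hxp
  · rw [Finset.mem_insert, Finset.mem_filter_univ, Equiv.Perm.mul_apply, hx,
      Equiv.swap_apply_left]
    exact not_or_intro hxp hxp.symm

end Involutions

theorem isInvolution_permCongr_revPerm_iff {n : ℕ} (π : Equiv.Perm (Fin n)) :
    IsInvolution (Fin.revPerm.permCongr π) ↔ IsInvolution π := by
  rw [IsInvolution, Fin.rev_surjective.forall]
  simp [IsInvolution]

theorem avoids213_permCongr_revPerm_iff {n : ℕ} (π : Equiv.Perm (Fin n)) :
    Avoids213 (Fin.revPerm.permCongr π) ↔ Avoids132 π := by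
  refine not_congr ⟨?_, ?_⟩ <;> rintro ⟨i, j, l, hij, hjl, h₁, h₂⟩ <;>
    exact ⟨l.rev, j.rev, i.rev, by simpa using hjl, by simpa using hij,
      by simpa using h₂, by simpa using h₁⟩

theorem fixedPts_permCongr_revPerm {n : ℕ} (π : Equiv.Perm (Fin n)) :
    fixedPts (Fin.revPerm.permCongr π) = fixedPts π :=
  (Finset.card_equiv Fin.revPerm fun i ↦ by simp).symm

theorem iCount132_eq_iCount213 (n k : ℕ) : iCount132 n k = iCount213 n k :=
  Nat.card_congr <| Fin.revPerm.permCongr.subtypeEquiv fun π ↦ by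
    rw [isInvolution_permCongr_revPerm_iff, avoids213_permCongr_revPerm_iff,
      fixedPts_permCongr_revPerm]

/-- The number of walks of length `n` on `ℕ` with steps `±1` from `k` to `0`: the common value of
the three counts, characterised by its recursion on the first step. -/
def ballot : ℕ → ℕ → ℕ
  | 0, 0 => 1
  | 0, _ + 1 => 0
  | n + 1, 0 => ballot n 1
  | n + 1, k + 1 => ballot n k + ballot n (k + 2)

theorem mem_iff_val_lt_card_of_isLowerSet {n : ℕ} {s : Finset (Fin n)}
    (hs : IsLowerSet (s : Set (Fin n))) (i : Fin n) : i ∈ s ↔ i.val < s.card := by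
  refine ⟨fun hi ↦ ?_, fun hi ↦ ?_⟩
  · have hsub : Finset.Iic i ⊆ s := fun j hj ↦ hs (Finset.mem_Iic.1 hj) hi
    simpa using Finset.card_le_card hsub
  · by_contra his
    have hsub : s ⊆ Finset.Iio i := fun j hj ↦
      Finset.mem_Iio.2 (lt_of_not_ge fun hij ↦ his (hs hij hj))
    have := Finset.card_le_card hsub
    rw [Fin.card_Iio] at this
    omega

/-- The excedances of `π`, i.e. the positions `i` with `i < π i`, are exactly the first `c`
positions. A `132`-avoiding involution has this shape, with `c` its number of 2-cycles. -/
def HasInitialExcedances {n : ℕ} (π : Equiv.Perm (Fin n)) (c : ℕ) : Prop :=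
  ∀ i : Fin n, i < π i ↔ i.val < c

section Avoids132

variable {m n : ℕ} {σ : Equiv.Perm (Fin m)} {π : Equiv.Perm (Fin n)}

theorem Avoids132.of_semiconj (hA : Avoids132 π) (e : Fin m ↪o Fin n)
    (h : Function.Semiconj e σ π) : Avoids132 σ := by
  rintro ⟨i, j, l, hij, hjl, hil, hlj⟩
  refine hA ⟨e i, e j, e l, ?_, ?_, ?_, ?_⟩ <;> simpa only [← h _, e.lt_iff_lt]

theorem IsInvolution.hasInitialExcedances (hI : IsInvolution π) (hA : Avoids132 π) {c : ℕ}
    (hc : n = 2 * c + fixedPts π) : HasInitialExcedances π c := by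
  have hlower : IsLowerSet (SetLike.coe (Finset.univ.filter fun i ↦ i < π i)) := by
    intro i j hji hi
    rw [Finset.mem_coe, Finset.mem_filter_univ] at hi ⊢
    by_contra! hj
    have hji' : j < i := lt_of_le_of_ne hji (by rintro rfl; exact absurd hi hj.not_gt)
    exact hA ⟨π j, i, π i, hj.trans_lt hji', hi, by rwa [hI, hI], by rwa [hI]⟩
  have hcard := hI.two_mul_card_excedances_add_fixedPts
  intro i
  have hmem := mem_iff_val_lt_card_of_isLowerSet hlower i
  rw [Finset.mem_filter_univ] at hmem
  rw [hmem]
  omega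

/- An occurrence `i < j < l` with `π l < l` is carried by `π` to the occurrence
`π i < π l < π j`, whose last position is not sent below itself. -/
theorem IsInvolution.avoids132_iff (hI : IsInvolution π) {c : ℕ} (hE : HasInitialExcedances π c) :
    Avoids132 π ↔ ∀ i j l, i < j → j < l → l ≤ π l → π i < π l → π j ≤ π l := by
  refine ⟨fun hA i j l hij hjl _ hil ↦ le_of_not_gt fun hlj ↦ hA ⟨i, j, l, hij, hjl, hil, hlj⟩,
    fun h ↦ ?_⟩
  rintro ⟨i, j, l, hij, hjl, hil, hlj⟩
  rcases le_or_gt l (π l) with hl | hl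
  · exact (h i j l hij hjl hl hil).not_gt hlj
  have hj : π j ≤ j := by
    by_contra! hj
    have hEi := hE i
    have hEj := hE j
    have hEl := hE (π l)
    have hEπi := hE (π i)
    rw [hI] at hEl hEπi
    omega
  have := h (π i) (π l) (π j) hil hlj (by rwa [hI])
  rw [hI, hI, hI] at this
  exact (this hij).not_gt hjl

/-- The `132`-avoiding involutions of `Fin n` with `k` fixed points, counted by `iCount132 n k`. -/
def involutions132 (n k : ℕ) : Set (Equiv.Perm (Fin n)) :=
  {π | IsInvolution π ∧ Avoids132 π ∧ fixedPts π = k}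

theorem ncard_involutions132 (n k : ℕ) : (involutions132 n k).ncard = iCount132 n k := rfl

theorem avoids132_iff_of_semiconj_succAbove {σ : Equiv.Perm (Fin n)} {π : Equiv.Perm (Fin (n + 1))}
    {x : Fin (n + 1)} (h : Function.Semiconj x.succAbove σ π) (hx : π x = x)
    (hI : IsInvolution π) (hn : n = 2 * x + fixedPts σ) :
    Avoids132 π ↔ Avoids132 σ := by
  refine ⟨fun hA ↦ hA.of_semiconj x.succAboveOrderEmb h, fun hA ↦ ?_⟩
  have hE : HasInitialExcedances π x := by
    intro i
    rw [← Fin.lt_def]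
    obtain rfl | ⟨i, rfl⟩ := x.eq_self_or_eq_succAbove i
    · simp [hx]
    · rw [← h, Fin.succAbove_lt_succAbove_iff, Fin.succAbove_lt_iff_castSucc_lt, Fin.lt_def]
      exact ((isInvolution_iff_of_semiconj_succAbove h hx).1 hI).hasInitialExcedances hA hn i
  rw [hI.avoids132_iff hE]
  intro i j l hij hjl hl hil
  by_contra! hlj
  have excedance_iff (i : Fin (n + 1)) : i < π i ↔ i < x := hE i
  have hi := excedance_iff i
  have hj := excedance_iff j
  have hπi := excedance_iff (π i)
  have hπl := excedance_iff l
  rw [hI] at hπi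
  obtain ⟨i', rfl⟩ : ∃ i', x.succAbove i' = i := Fin.exists_succAbove_eq (by grind)
  obtain ⟨j', rfl⟩ : ∃ j', x.succAbove j' = j := Fin.exists_succAbove_eq (by grind)
  obtain ⟨l', rfl⟩ : ∃ l', x.succAbove l' = l := Fin.exists_succAbove_eq (by grind)
  simp only [← h _, Fin.succAbove_lt_succAbove_iff] at hij hjl hil hlj
  exact hA ⟨i', j', l', hij, hjl, hil, hlj⟩

theorem ncard_involutions132_inter_fixed {n k : ℕ} (x : Fin (n + 1)) (hn : n = 2 * x + k) :
    (involutions132 (n + 1) (k + 1) ∩ {π | π x = x}).ncard = iCount132 n k :=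
  ncard_inter_fixed x fun σ π h hx ↦ by
    simp only [involutions132, Set.mem_ofPred_eq, isInvolution_iff_of_semiconj_succAbove h hx,
      fixedPts_eq_of_semiconj_succAbove h hx, Nat.add_right_cancel_iff]
    refine and_congr_right fun hIσ ↦ and_congr_left fun hk ↦ ?_
    exact avoids132_iff_of_semiconj_succAbove h hx
      ((isInvolution_iff_of_semiconj_succAbove h hx).2 hIσ) (hk ▸ hn)

theorem hasInitialExcedances_swap_mul_iff {x p : Fin n} (hx : π x = x) (hp : π p = p)
    (hxp : x < p) :
    HasInitialExcedances (Equiv.swap x p * π) (x + 1) ↔ HasInitialExcedances π x := by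
  refine forall_congr' fun i ↦ ?_
  have := π.injective.eq_iff (a := i) (b := x)
  have := π.injective.eq_iff (a := i) (b := p)
  rw [Equiv.Perm.mul_apply, Equiv.swap_apply_def]
  grind

theorem swap_mul_apply_of_ne {x p i : Fin n} (hx : π x = x) (hp : π p = p) (hix : i ≠ x)
    (hip : i ≠ p) : (Equiv.swap x p * π) i = π i :=
  Equiv.swap_apply_of_ne_of_ne (fun h ↦ hix (π.injective (h.trans hx.symm)))
    fun h ↦ hip (π.injective (h.trans hp.symm))

/- Linking the fixed points `x < p` of `π` only affects occurrences through `x` or `p`, and these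
trade places: `i < j < x` with `p` between the values of `i` and `j` becomes `i < j < p`. -/
theorem avoids132_swap_mul_iff {x p : Fin n} (hI : IsInvolution π) (hx : π x = x)
    (hp : IsLeast {q | x < q ∧ π q = q} p) (hE : HasInitialExcedances π x) :
    Avoids132 (Equiv.swap x p * π) ↔ Avoids132 π := by
  obtain ⟨⟨hxp, hpp⟩, hmin⟩ := hp
  rw [((isInvolution_swap_mul_iff hx hpp).2 hI).avoids132_iff
    ((hasInitialExcedances_swap_mul_iff hx hpp hxp).2 hE), hI.avoids132_iff hE]
  have hagree (i : Fin n) := swap_mul_apply_of_ne (i := i) hx hpp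
  have hτx : (Equiv.swap x p * π) x = p := by simp [hx]
  have hτp : (Equiv.swap x p * π) p = x := by simp [hpp]
  set τ := Equiv.swap x p * π
  have excedance_iff (i : Fin n) : i < π i ↔ i < x := hE i
  have le_apply {i : Fin n} (hi : i < x) : x ≤ π i := by
    have := excedance_iff i
    have := excedance_iff (π i)
    rw [hI] at this
    grind
  constructor
  · intro hτ i j l hij hjl hl hil
    by_contra! hlj
    have hjx : j < x := (excedance_iff j).1 (by order)
    have := le_apply (hij.trans hjx)
    have := excedance_iff l
    by_cases hlp : l = p
    · have := hτ i j x
      grind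
    · have := hτ i j l
      grind
  · intro hπ i j l hij hjl hl hil
    by_contra! hlj
    have hlp : l ≠ p := by grind
    have := excedance_iff l
    have := excedance_iff j
    rcases eq_or_ne l x with rfl | hlx
    · have := hπ i j p
      grind
    rcases eq_or_ne j x with rfl | hjx
    · have hleast : p ≤ l := hmin ⟨by grind, by grind⟩
      grind
    have := hπ i j l
    grind

theorem isLeast_apply_of_avoids132 {x y : Fin n} (hI : IsInvolution π) (hA : Avoids132 π)
    (hE : HasInitialExcedances π y) (hxy : (y : ℕ) = x + 1) (hy : π y ≠ y) :
    IsLeast {q | x < q ∧ (Equiv.swap x (π x) * π) q = q} (π x) := by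
  have hxπ : x < π x := (hE x).2 (by omega)
  refine ⟨⟨hxπ, by simp [hI x]⟩, fun q ⟨hxq, hq⟩ ↦ ?_⟩
  by_contra! hqx
  have hqfix : π q = q := by
    have hne : π q ≠ x ∧ π q ≠ π x := by
      rw [π.injective.ne_iff, ← hI x, π.injective.ne_iff, hI x]
      exact ⟨hqx.ne, hxq.ne'⟩
    rwa [Equiv.Perm.mul_apply, Equiv.swap_apply_of_ne_of_ne hne.1 hne.2] at hq
  have hπy : π y < x := by
    have := hE y
    have := hE (π y)
    have := hI y
    have := hI x
    grind
  exact hA ⟨π y, x, q, hπy, hxq, by rw [hI, hqfix]; grind, by rwa [hqfix]⟩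

theorem swap_mul_mem_involutions132_iff {k : ℕ} {x p : Fin n} (hx : π x = x)
    (hp : IsLeast {q | x < q ∧ π q = q} p) (hn : n = 2 * (x + 1) + k) :
    Equiv.swap x p * π ∈ involutions132 n k ↔ π ∈ involutions132 n (k + 2) := by
  have hxp := hp.1.1
  have hpp := hp.1.2
  have hF := fixedPts_swap_mul_add_two hxp.ne hx hpp
  simp only [involutions132, Set.mem_ofPred_eq, ← hF, isInvolution_swap_mul_iff hx hpp,
    Nat.add_right_cancel_iff]
  refine and_congr_right fun hI ↦ and_congr_left fun hk ↦ ⟨fun hA ↦ ?_, fun hA ↦ ?_⟩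
  · have hE := ((isInvolution_swap_mul_iff hx hpp).2 hI).hasInitialExcedances hA (hk ▸ hn)
    exact (avoids132_swap_mul_iff hI hx hp
      ((hasInitialExcedances_swap_mul_iff hx hpp hxp).1 hE)).1 hA
  · exact (avoids132_swap_mul_iff hI hx hp (hI.hasInitialExcedances hA (by omega))).2 hA

theorem swap_mul_apply_ne_of_isLeast {x y p : Fin n} (hx : π x = x)
    (hp : IsLeast {q | x < q ∧ π q = q} p) (hxy : x < y) (hyp : y ≤ p) :
    (Equiv.swap x p * π) y ≠ y := by
  obtain ⟨⟨hxp, hpp⟩, hmin⟩ := hp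
  rcases hyp.eq_or_lt with rfl | hyp
  · simpa [hpp] using hxp.ne
  · rw [swap_mul_apply_of_ne hx hpp hxy.ne' hyp.ne]
    exact fun hy ↦ hyp.not_ge (hmin ⟨hxy, hy⟩)

theorem exists_isLeast_fixed_gt {x : Fin n} (hE : HasInitialExcedances π x)
    (hF : 2 ≤ fixedPts π) : ∃ p, IsLeast {q | x < q ∧ π q = q} p := by
  obtain ⟨q, hq, hqx⟩ := Finset.exists_mem_ne hF x
  rw [Finset.mem_filter_univ] at hq
  have hxq : x < q := lt_of_le_of_ne
    (le_of_not_gt fun hlt ↦ ((hE q).2 hlt).ne hq.symm) hqx.symm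
  obtain ⟨p, hp, hmin⟩ := Set.exists_min_image {q | x < q ∧ π q = q} id (Set.toFinite _)
    ⟨q, hxq, hq⟩
  exact ⟨p, hp, hmin⟩

/- The bijection cuts the arc at `x`, which is the last excedance on the left-hand side. -/
theorem ncard_involutions132_diff_fixed {k : ℕ} {x y : Fin n} (hxy : (y : ℕ) = x + 1)
    (hn : n = 2 * y + k) :
    (involutions132 n k \ {π | π y = y}).ncard =
      (involutions132 n (k + 2) ∩ {π | π x = x}).ncard := by
  have hleast : ∀ π ∈ involutions132 n k \ {π | π y = y},
      IsLeast {q | x < q ∧ (Equiv.swap x (π x) * π) q = q} (π x) := by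
    rintro π ⟨⟨hI, hA, hk⟩, hy⟩
    exact isLeast_apply_of_avoids132 hI hA (hI.hasInitialExcedances hA (hk ▸ hn)) hxy hy
  refine Set.BijOn.ncard_eq (f := fun π ↦ Equiv.swap x (π x) * π) ⟨?_, ?_, ?_⟩
  · intro π hπ
    have hfix : (Equiv.swap x (π x) * π) x = x := by simp
    refine ⟨(swap_mul_mem_involutions132_iff hfix (hleast π hπ) (hxy ▸ hn)).1 ?_, hfix⟩
    rw [Equiv.swap_mul_self_mul]
    exact hπ.1
  · intro π hπ ρ hρ (heq : Equiv.swap x (π x) * π = Equiv.swap x (ρ x) * ρ)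
    have hlink : π x = ρ x := (hleast π hπ).unique (heq ▸ hleast ρ hρ)
    rw [hlink] at heq
    exact mul_left_cancel heq
  · rintro τ ⟨hτ, hx : τ x = x⟩
    have hk : fixedPts τ = k + 2 := hτ.2.2
    obtain ⟨p, hp⟩ := exists_isLeast_fixed_gt (x := x)
      (hτ.1.hasInitialExcedances hτ.2.1 (by omega)) (by omega)
    have hxp := hp.1.1
    refine ⟨Equiv.swap x p * τ, ⟨?_, ?_⟩, ?_⟩
    · exact (swap_mul_mem_involutions132_iff hx hp (hxy ▸ hn)).2 hτ
    · exact swap_mul_apply_ne_of_isLeast hx hp (by omega) (by omega)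
    · simp [hx]

theorem iCount132_eq_zero {n k : ℕ} (h : ∀ c, n ≠ 2 * c + k) : iCount132 n k = 0 := by
  rw [← ncard_involutions132, Set.ncard_eq_zero, Set.eq_empty_iff_forall_notMem]
  rintro π ⟨hI, -, hk⟩
  exact h _ (hk ▸ hI.two_mul_card_excedances_add_fixedPts.symm)

theorem ncard_involutions132_diff_fixed_center {n k : ℕ} (y : Fin (n + 1))
    (hn : n + 1 = 2 * y + k) :
    (involutions132 (n + 1) k \ {π | π y = y}).ncard = iCount132 n (k + 1) := by
  rcases y.val.eq_zero_or_eq_succ_pred with hy | hy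
  · rw [iCount132_eq_zero (by omega), Set.ncard_eq_zero, Set.sdiff_eq_empty]
    exact fun π hπ ↦ apply_eq_of_fixedPts_eq (hπ.2.2.trans (by omega)) y
  · rw [ncard_involutions132_diff_fixed (x := ⟨y.val.pred, by omega⟩) hy hn,
      ncard_involutions132_inter_fixed ⟨y.val.pred, by omega⟩ (by simp only; omega)]

theorem iCount132_zero_zero : iCount132 0 0 = 1 := by
  have hall (π : Equiv.Perm (Fin 0)) : IsInvolution π ∧ Avoids132 π ∧ fixedPts π = 0 :=
    ⟨finZeroElim, fun ⟨i, _⟩ ↦ i.elim0, rfl⟩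
  simp [iCount132, hall]

theorem iCount132_succ_zero (n : ℕ) : iCount132 (n + 1) 0 = iCount132 n 1 := by
  by_cases h : ∃ c, n + 1 = 2 * c
  · obtain ⟨c, hc⟩ := h
    have hdisj : Disjoint (involutions132 (n + 1) 0) {π | π ⟨c, by omega⟩ = ⟨c, by omega⟩} :=
      Set.disjoint_left.2 fun π hπ ↦ apply_ne_of_fixedPts_eq_zero hπ.2.2 _
    rw [← ncard_involutions132_diff_fixed_center ⟨c, by omega⟩ hc, hdisj.sdiff_eq_left,
      ncard_involutions132]
  · rw [iCount132_eq_zero fun c hc ↦ h ⟨c, hc⟩,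
      iCount132_eq_zero fun c hc ↦ h ⟨c + 1, by omega⟩]

theorem iCount132_succ_succ (n k : ℕ) :
    iCount132 (n + 1) (k + 1) = iCount132 n k + iCount132 n (k + 2) := by
  by_cases h : ∃ c, n = 2 * c + k
  · obtain ⟨c, hc⟩ := h
    rw [← ncard_involutions132_diff_fixed_center (k := k + 1) ⟨c, by omega⟩ (by simp only; omega),
      ← ncard_involutions132_inter_fixed ⟨c, by omega⟩ hc,
      Set.ncard_inter_add_ncard_sdiff_eq_ncard, ncard_involutions132]
  · rw [iCount132_eq_zero fun c hc ↦ h ⟨c, by omega⟩,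
      iCount132_eq_zero fun c hc ↦ h ⟨c, hc⟩, iCount132_eq_zero fun c hc ↦ h ⟨c + 1, by omega⟩]

theorem iCount132_eq_ballot (n k : ℕ) : iCount132 n k = ballot n k := by
  induction n generalizing k with
  | zero =>
    cases k with
    | zero => exact iCount132_zero_zero
    | succ k => exact iCount132_eq_zero (by omega)
  | succ n ih =>
    cases k with
    | zero => rw [iCount132_succ_zero, ih, ballot]
    | succ k => rw [iCount132_succ_succ, ih, ih, ballot]

end Avoids132

section Avoids321

variable {m n : ℕ} {σ : Equiv.Perm (Fin m)} {π : Equiv.Perm (Fin n)}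

theorem Avoids321.of_semiconj (hA : Avoids321 π) (e : Fin m ↪o Fin n)
    (h : Function.Semiconj e σ π) : Avoids321 σ := by
  rintro ⟨i, j, l, hij, hjl, hlj, hji⟩
  refine hA ⟨e i, e j, e l, ?_, ?_, ?_, ?_⟩ <;> simpa only [← h _, e.lt_iff_lt]

theorem IsInvolution.avoids321_iff (hI : IsInvolution π) :
    Avoids321 π ↔ ∀ i j, i < j → j ≤ π j → π i < π j := by
  refine ⟨fun hA i j hij hj ↦ ?_, fun h ↦ ?_⟩
  · by_contra! hji
    have hlt : π j < π i := hji.lt_of_ne (π.injective.ne hij.ne')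
    exact hA ⟨i, j, π i, hij, hj.trans_lt hlt, by rw [hI]; exact hij.trans_le hj, hlt⟩
  · rintro ⟨i, j, l, hij, hjl, hlj, hji⟩
    rcases le_or_gt j (π j) with hj | hj
    · exact (h i j hij hj).not_gt hji
    · have := h (π l) (π j) hlj (by rw [hI]; exact hj.le)
      rw [hI, hI] at this
      exact this.not_gt hjl

theorem avoids321_iff_of_semiconj (e : Fin m ↪o Fin n) (h : Function.Semiconj e σ π)
    (hI : IsInvolution π) (hright : ∀ b ∉ Set.range e, ∀ j, b < j → π j < j)
    (hmax : ∀ b ∉ Set.range e, b ≤ π b → ∀ i, π i ≤ π b) : Avoids321 π ↔ Avoids321 σ := by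
  refine ⟨fun hA ↦ hA.of_semiconj e h, fun hA ↦ ?_⟩
  have hIσ : IsInvolution σ := fun i ↦ e.injective (by rw [h, h, hI])
  rw [hI.avoids321_iff]
  intro i j hij hj
  by_cases hjr : j ∈ Set.range e
  · by_cases hir : i ∈ Set.range e
    · obtain ⟨i, rfl⟩ := hir
      obtain ⟨j, rfl⟩ := hjr
      rw [← h, e.le_iff_le] at hj
      rw [← h, ← h, e.lt_iff_lt]
      exact hIσ.avoids321_iff.1 hA i j (e.lt_iff_lt.1 hij) hj
    · exact absurd (hright i hir j hij) hj.not_gt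
  · exact (hmax j hjr hj i).lt_of_ne (π.injective.ne hij.ne)

/-- The `321`-avoiding involutions of `Fin n` with `k` fixed points in which every position from
`d` on (counting from `0`) is the larger element of a 2-cycle. Counting them by recursion on `d`
amounts to reading the positions from right to left. -/
def closingInvolutions321 (n d k : ℕ) : Set (Equiv.Perm (Fin n)) :=
  {π | IsInvolution π ∧ Avoids321 π ∧ fixedPts π = k ∧ ∀ i : Fin n, d ≤ i → π i < i}

theorem ncard_closingInvolutions321_self (n k : ℕ) :
    (closingInvolutions321 n n k).ncard = iCount321 n k := by
  have hset : closingInvolutions321 n n k =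
      {π | IsInvolution π ∧ Avoids321 π ∧ fixedPts π = k} := by
    ext π
    simp [closingInvolutions321, Fin.is_lt, ← not_lt]
  rw [hset]
  rfl

theorem forall_succ_le_and_apply_lt_iff {d : ℕ} {a : Fin n} (ha : (a : ℕ) = d) :
    ((∀ i : Fin n, d + 1 ≤ i → π i < i) ∧ π a < a) ↔ ∀ i : Fin n, d ≤ i → π i < i := by
  refine ⟨fun ⟨h, hπa⟩ i hi ↦ ?_, fun h ↦ ⟨fun i hi ↦ h i (by omega), h a ha.ge⟩⟩
  rcases hi.eq_or_lt with hi | hi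
  · rwa [show i = a from Fin.ext (hi.symm.trans ha.symm)]
  · exact h i hi

theorem closingInvolutions321_inter {d k : ℕ} {a : Fin n} (ha : (a : ℕ) = d) :
    closingInvolutions321 n (d + 1) k ∩ {π | π a < a} = closingInvolutions321 n d k := by
  ext π
  simp only [closingInvolutions321, Set.mem_inter_iff, Set.mem_ofPred_eq, and_assoc,
    forall_succ_le_and_apply_lt_iff ha]

theorem apply_eq_last_of_mem_closingInvolutions321 {d k : ℕ} {π : Equiv.Perm (Fin (n + 1))}
    {a : Fin (n + 1)} (ha : (a : ℕ) = d) (hπ : π ∈ closingInvolutions321 (n + 1) (d + 1) k)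
    (hπa : a ≤ π a) : π a = Fin.last n := by
  obtain ⟨hI, hA, -, hclose⟩ := hπ
  have hlast : π (Fin.last n) ≤ a := by
    by_contra! hlt
    have := hclose (π (Fin.last n)) (by omega)
    rw [hI] at this
    exact (Fin.le_last _).not_gt this
  rcases hlast.eq_or_lt with hlast | hlast
  · rw [← hlast, hI]
  · have := hI.avoids321_iff.1 hA _ a hlast hπa
    rw [hI] at this
    exact absurd this (Fin.le_last _).not_gt

theorem ncard_closingInvolutions321_inter_fixed_last (d k : ℕ) :
    (closingInvolutions321 (d + 1) (d + 1) (k + 1) ∩ {π | π (Fin.last d) = Fin.last d}).ncard =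
      (closingInvolutions321 d d k).ncard :=
  ncard_inter_fixed (Fin.last d) fun σ π h hlast ↦ by
    simp only [closingInvolutions321, Set.mem_ofPred_eq,
      isInvolution_iff_of_semiconj_succAbove h hlast,
      fixedPts_eq_of_semiconj_succAbove h hlast, Nat.add_right_cancel_iff]
    refine and_congr_right fun hI ↦ and_congr ?_ (and_congr_right fun _ ↦ ?_)
    · refine avoids321_iff_of_semiconj (Fin.last d).succAboveOrderEmb h
        ((isInvolution_iff_of_semiconj_succAbove h hlast).2 hI) ?_ ?_
      · simp [(Fin.le_last _).not_gt]
      · simp [hlast, Fin.le_last]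
    · exact iff_of_true (fun i hi ↦ by omega) (fun i hi ↦ by omega)

/-- The order embedding of `Fin m` into `Fin (m + 2)` that omits `a` and the last position, so that
its extensions by the 2-cycle of these two positions are insertions of an arc. -/
def arcEmb {m : ℕ} (a : Fin (m + 1)) : Fin m ↪o Fin (m + 2) :=
  a.succAboveOrderEmb.trans Fin.castSuccOrderEmb

theorem notMem_range_arcEmb {a : Fin (m + 1)} {b : Fin (m + 2)} :
    b ∉ Set.range (arcEmb a) ↔ b = a.castSucc ∨ b = Fin.last (m + 1) := by
  have hrange : Set.range (arcEmb a) = Fin.castSucc '' {a}ᶜ := by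
    rw [← Fin.range_succAbove, ← Set.range_comp]
    rfl
  rw [hrange]
  induction b using Fin.lastCases with
  | last => simp
  | cast b => simp [(Fin.castSucc_lt_last b).ne]

theorem succ_le_val_arcEmb_iff {a : Fin (m + 1)} {i : Fin m} :
    a + 1 ≤ (arcEmb a i).val ↔ a.val ≤ i := by
  rw [Nat.succ_le_iff]
  change a < a.succAbove i ↔ _
  rw [Fin.lt_succAbove_iff_le_castSucc, Fin.le_def, Fin.val_castSucc]

theorem forall_apply_lt_iff_of_semiconj_arcEmb {a : Fin (m + 1)} {π : Equiv.Perm (Fin (m + 2))}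
    (h : Function.Semiconj (arcEmb a) σ π) (hlast : π (Fin.last (m + 1)) = a.castSucc) :
    (∀ i : Fin (m + 2), a + 1 ≤ i.val → π i < i) ↔ ∀ i : Fin m, a.val ≤ i → σ i < i := by
  refine ⟨fun hπ i hi ↦ ?_, fun hσ b hb ↦ ?_⟩
  · have := hπ (arcEmb a i) (succ_le_val_arcEmb_iff.2 hi)
    rwa [← h, (arcEmb a).lt_iff_lt] at this
  · by_cases hbr : b ∈ Set.range (arcEmb a)
    · obtain ⟨i, rfl⟩ := hbr
      rw [← h, (arcEmb a).lt_iff_lt]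
      exact hσ i (succ_le_val_arcEmb_iff.1 hb)
    · rcases notMem_range_arcEmb.1 hbr with rfl | rfl
      · simp at hb
      · rw [hlast]
        exact Fin.castSucc_lt_last a

theorem mem_closingInvolutions321_iff_of_semiconj_arcEmb {k : ℕ} {a : Fin (m + 1)}
    {π : Equiv.Perm (Fin (m + 2))} (h : Function.Semiconj (arcEmb a) σ π)
    (ha : π a.castSucc = Fin.last (m + 1)) (hlast : π (Fin.last (m + 1)) = a.castSucc) :
    π ∈ closingInvolutions321 (m + 2) (a + 1) k ↔ σ ∈ closingInvolutions321 m a k := by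
  have hI : IsInvolution π ↔ IsInvolution σ :=
    isInvolution_iff_of_semiconj (arcEmb a).toEmbedding h fun b hb ↦ by
      rcases notMem_range_arcEmb.1 hb with rfl | rfl <;> simp only [ha, hlast]
  have hF : fixedPts π = fixedPts σ := by
    rw [fixedPts_eq_of_semiconj (arcEmb a).toEmbedding h, Nat.add_eq_left, Finset.card_eq_zero,
      Finset.filter_eq_empty_iff]
    rintro b - ⟨hb, hfix⟩
    rcases notMem_range_arcEmb.1 hb with rfl | rfl
    · exact (Fin.castSucc_lt_last a).ne' (ha.symm.trans hfix)
    · exact (Fin.castSucc_lt_last a).ne (hlast.symm.trans hfix)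
  simp only [closingInvolutions321, Set.mem_ofPred_eq, hF,
    forall_apply_lt_iff_of_semiconj_arcEmb h hlast, ← hI]
  refine and_congr_right fun hIπ ↦ and_congr_left fun ⟨_, hclose⟩ ↦ ?_
  rw [← forall_apply_lt_iff_of_semiconj_arcEmb h hlast] at hclose
  refine avoids321_iff_of_semiconj (arcEmb a) h hIπ (fun b hb j hbj ↦ ?_) fun b hb hle i ↦ ?_
  · rcases notMem_range_arcEmb.1 hb with rfl | rfl
    · exact hclose j hbj
    · exact absurd hbj (Fin.le_last j).not_gt
  · rcases notMem_range_arcEmb.1 hb with rfl | rfl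
    · exact ha ▸ Fin.le_last _
    · exact absurd (hlast ▸ hle) (Fin.castSucc_lt_last a).not_ge

theorem ncard_closingInvolutions321_diff {k : ℕ} (a : Fin (m + 1)) :
    (closingInvolutions321 (m + 2) (a + 1) k \ {π | π a.castSucc < a.castSucc}).ncard =
      (closingInvolutions321 m a k).ncard := by
  have hout (π : Equiv.Perm (Fin (m + 2))) : (∀ b ∉ Set.range (arcEmb a).toEmbedding,
      π b = Equiv.swap a.castSucc (Fin.last (m + 1)) b) ↔
        π a.castSucc = Fin.last (m + 1) ∧ π (Fin.last (m + 1)) = a.castSucc := by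
    simp only [RelEmbedding.coe_toEmbedding, notMem_range_arcEmb, forall_eq_or_imp, forall_eq,
      Equiv.swap_apply_left, Equiv.swap_apply_right]
  rw [← ncard_inter_extensions (arcEmb a).toEmbedding
    (Equiv.swap a.castSucc (Fin.last (m + 1))) ?_ fun σ π h hπ ↦
      mem_closingInvolutions321_iff_of_semiconj_arcEmb h ((hout π).1 hπ).1 ((hout π).1 hπ).2]
  · congr 1
    ext π
    refine and_congr_right fun hπ ↦ ?_
    rw [Set.mem_ofPred_eq, Set.mem_ofPred_eq, hout, not_lt]
    refine ⟨fun hle ↦ ?_, fun ⟨h, _⟩ ↦ h ▸ Fin.le_last _⟩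
    have := apply_eq_last_of_mem_closingInvolutions321 (a := a.castSucc) rfl hπ hle
    exact ⟨this, by rw [← this, hπ.1]⟩
  · intro i
    have := mt (notMem_range_arcEmb (a := a)).2 (not_not_intro ⟨i, rfl⟩)
    exact Equiv.swap_apply_of_ne_of_ne (fun h ↦ this (.inl h)) fun h ↦ this (.inr h)

theorem ncard_closingInvolutions321_succ {d k : ℕ} {a : Fin n} (ha : (a : ℕ) = d) :
    (closingInvolutions321 n (d + 1) k).ncard = (closingInvolutions321 n d k).ncard +
      (closingInvolutions321 n (d + 1) k \ {π | π a < a}).ncard := by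
  rw [← closingInvolutions321_inter ha, Set.ncard_inter_add_ncard_sdiff_eq_ncard]

theorem ncard_closingInvolutions321_add_two {d : ℕ} (hd : d ≤ m) (k : ℕ) :
    (closingInvolutions321 (m + 2) (d + 1) k).ncard =
      (closingInvolutions321 (m + 2) d k).ncard + (closingInvolutions321 m d k).ncard := by
  obtain ⟨a, rfl⟩ : ∃ a : Fin (m + 1), a.val = d := ⟨⟨d, Nat.lt_succ_of_le hd⟩, rfl⟩
  rw [ncard_closingInvolutions321_succ a.val_castSucc, ncard_closingInvolutions321_diff]

theorem closingInvolutions321_diff_last (d k : ℕ) :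
    closingInvolutions321 (d + 1) (d + 1) k \ {π | π (Fin.last d) < Fin.last d} =
      closingInvolutions321 (d + 1) (d + 1) k ∩ {π | π (Fin.last d) = Fin.last d} := by
  ext π
  exact and_congr_right fun _ ↦ Fin.lt_last_iff_ne_last.not_left

theorem ncard_closingInvolutions321_succ_self_zero (d : ℕ) :
    (closingInvolutions321 (d + 1) (d + 1) 0).ncard =
      (closingInvolutions321 (d + 1) d 0).ncard := by
  have hempty : closingInvolutions321 (d + 1) (d + 1) 0 ∩ {π | π (Fin.last d) = Fin.last d} = ∅ :=
    Set.disjoint_iff_inter_eq_empty.1 <|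
      Set.disjoint_left.2 fun π hπ ↦ apply_ne_of_fixedPts_eq_zero hπ.2.2.1 _
  rw [ncard_closingInvolutions321_succ (Fin.val_last d), closingInvolutions321_diff_last, hempty,
    Set.ncard_empty, add_zero]

theorem ncard_closingInvolutions321_succ_self_succ (d k : ℕ) :
    (closingInvolutions321 (d + 1) (d + 1) (k + 1)).ncard =
      (closingInvolutions321 (d + 1) d (k + 1)).ncard + (closingInvolutions321 d d k).ncard := by
  rw [ncard_closingInvolutions321_succ (Fin.val_last d), closingInvolutions321_diff_last,
    ncard_closingInvolutions321_inter_fixed_last]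

theorem ncard_closingInvolutions321_zero (n k : ℕ) :
    (closingInvolutions321 n 0 k).ncard = ballot 0 (k + n) := by
  cases n with
  | zero =>
    cases k with
    | zero =>
      have huniv : closingInvolutions321 0 0 0 = Set.univ := Set.eq_univ_of_forall fun π ↦
        ⟨finZeroElim, fun ⟨i, _⟩ ↦ i.elim0, rfl, finZeroElim⟩
      simp [huniv, ballot]
    | succ k =>
      rw [(Set.ncard_eq_zero (Set.toFinite _)).2, add_zero, ballot]
      exact Set.eq_empty_of_forall_notMem fun π hπ ↦ Nat.succ_ne_zero k hπ.2.2.1.symm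
  | succ n =>
    rw [(Set.ncard_eq_zero (Set.toFinite _)).2, ← add_assoc, ballot]
    exact Set.eq_empty_of_forall_notMem fun π hπ ↦
      (hπ.2.2.2 0 le_rfl).not_ge (Fin.zero_le _)

theorem ncard_closingInvolutions321 (d s k : ℕ) (hn : n = d + s) :
    (closingInvolutions321 n d k).ncard = ballot d (k + s) := by
  induction d generalizing n s k with
  | zero => rw [ncard_closingInvolutions321_zero, hn, zero_add]
  | succ d ih =>
    rcases s with _ | s
    · subst hn
      rcases k with _ | k
      · rw [ncard_closingInvolutions321_succ_self_zero, ih 1 0 rfl, ballot]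
      · rw [ncard_closingInvolutions321_succ_self_succ, ih 1 (k + 1) rfl, ih 0 k (add_zero d).symm]
        exact add_comm _ _
    · obtain rfl : n = (d + s) + 2 := by omega
      rw [ncard_closingInvolutions321_add_two (by omega), ih (s + 2) k (add_assoc d s 2),
        ih s k rfl]
      exact add_comm _ _

end Avoids321

theorem iCount321_eq_ballot (n k : ℕ) : iCount321 n k = ballot n k := by
  rw [← ncard_closingInvolutions321_self, ncard_closingInvolutions321 n 0 k (add_zero n).symm,
    add_zero]

/-- For all `n ≥ 1` and `0 ≤ k ≤ n`, `i_n^k(132) = i_n^k(213) = i_n^k(321)`. -/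
theorem statement5 (n k : ℕ) (hn : 1 ≤ n) (hk : k ≤ n) :
    iCount132 n k = iCount213 n k ∧ iCount213 n k = iCount321 n k := by
  rw [← iCount132_eq_iCount213, iCount132_eq_ballot, iCount321_eq_ballot]
  exact ⟨rfl, rfl⟩
end

section
/- For all integers n ≥ 1 and 0 ≤ k ≤ n with n + k even, the number of 231-avoiding involutions of {1,2,…,n} with exactly k fixed points equals 2^{(n-k-2)/2}·( C((n+k)/2, (n-k)/2) + C((n+k-2)/2, (n-k)/2) ), where for n - k = 0 the (possibly fractional) power of 2 times the bracket is interpreted via the exact equality 2·i_n^k(231) = 2^{(n-k)/2}·( C((n+k)/2,(n-k)/2) + C((n+k-2)/2,(n-k)/2) ); when n + k is odd this number is 0. -/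
/-- A permutation of `Fin n` avoids the pattern 231. -/
def Avoids231 {n : ℕ} (π : Equiv.Perm (Fin n)) : Prop :=
  ¬ ∃ i₁ i₂ i₃ : Fin n, i₁ < i₂ ∧ i₂ < i₃ ∧ (π i₃ < π i₁ ∧ π i₁ < π i₂)

/-- `i_n^k(231)`: the number of 231-avoiding involutions of `{1, …, n}` with exactly
`k` fixed points. -/
noncomputable def iCount231 (n k : ℕ) : ℕ :=
  Nat.card {π : Equiv.Perm (Fin n) // IsInvolution π ∧ Avoids231 π ∧ fixedPts π = k}

open Finset Function Polynomial

theorem add_le_of_strictAntiOn_Iic {f : ℕ → ℕ} {a i d : ℕ} (hf : StrictAntiOn f (Set.Iic a))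
    (h : i + d ≤ a) : f (i + d) + d ≤ f i := by
  induction d with
  | zero => simp
  | succ d ih =>
    have hlt : f (i + (d + 1)) < f (i + d) :=
      hf (Set.mem_Iic.2 (by omega)) (Set.mem_Iic.2 h) (by omega)
    have hle := ih (by omega)
    omega

theorem count_sub_eq_self (a : ℕ) :
    Nat.count (fun i ↦ a - i = i) (a + 1) = if Even a then 1 else 0 := by
  rw [Nat.count_eq_card_filter_range]
  split_ifs with ha
  · obtain ⟨b, rfl⟩ := ha
    rw [card_eq_one]
    refine ⟨b, ext fun i ↦ ?_⟩
    simp only [mem_filter, mem_range, mem_singleton]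
    omega
  · rw [card_eq_zero, filter_eq_empty_iff]
    intro i hi hfix
    rw [mem_range] at hi
    exact ha ⟨i, by omega⟩

/-- 231-avoiding involutions of `ℕ`, given by their underlying functions. -/
structure Is231AvoidingInvolution (f : ℕ → ℕ) : Prop where
  involutive : Involutive f
  not_231 ⦃i j k : ℕ⦄ : i < j → j < k → f k < f i → ¬ f i < f j

/-- The function whose first layer reverses `{0, …, a}` and which acts as `g`, translated by
`a + 1`, on the remaining numbers: the direct sum of a decreasing permutation and `g`. -/
def prependLayer (a : ℕ) (g : ℕ → ℕ) (i : ℕ) : ℕ :=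
  if i ≤ a then a - i else a + 1 + g (i - (a + 1))

/-- The function induced by `f` on the numbers exceeding `f 0`, translated back to `ℕ`: if `f` is a
231-avoiding involution, this removes its first layer. -/
def dropLayer (f : ℕ → ℕ) (i : ℕ) : ℕ :=
  f (f 0 + 1 + i) - (f 0 + 1)

section Layers

variable {a i : ℕ} {g : ℕ → ℕ}

theorem prependLayer_of_le (h : i ≤ a) : prependLayer a g i = a - i :=
  if_pos h

theorem prependLayer_zero : prependLayer a g 0 = a :=
  prependLayer_of_le a.zero_le

theorem prependLayer_add : prependLayer a g (a + 1 + i) = a + 1 + g i := by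
  rw [prependLayer, if_neg (by omega), Nat.add_sub_cancel_left]

theorem dropLayer_prependLayer : dropLayer (prependLayer a g) = g := by
  funext i
  rw [dropLayer, prependLayer_zero, prependLayer_add, Nat.add_sub_cancel_left]

theorem count_isFixedPt_prependLayer (m : ℕ) :
    Nat.count (IsFixedPt (prependLayer a g)) (a + 1 + m) =
      (if Even a then 1 else 0) + Nat.count (IsFixedPt g) m := by
  rw [Nat.count_add, ← count_sub_eq_self]
  congr 1
  · simp only [Nat.count_eq_card_filter_range]
    refine congrArg card (filter_congr fun i hi ↦ ?_)
    rw [IsFixedPt, prependLayer_of_le (Nat.lt_succ_iff.1 (mem_range.1 hi))]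
  · simp only [IsFixedPt, prependLayer_add, Nat.add_left_cancel_iff]
    rfl

end Layers

namespace Is231AvoidingInvolution

variable {f g : ℕ → ℕ} {i : ℕ}

protected theorem id : Is231AvoidingInvolution id :=
  ⟨fun _ ↦ rfl, fun _ _ _ hij hjk hki _ ↦ (hij.trans hjk).asymm hki⟩

theorem strictAntiOn_Iic (hf : Is231AvoidingInvolution f) : StrictAntiOn f (Set.Iic (f 0)) := by
  intro i _ j hj hij
  by_contra! hle
  have hlt : f i < f j := hle.lt_of_ne (hf.involutive.injective.ne hij.ne)
  have hzero : f (f 0) = 0 := hf.involutive 0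
  have hj_ne : j ≠ f 0 := by
    rintro rfl
    omega
  have hj_lt : j < f 0 := lt_of_le_of_ne hj hj_ne
  have hi_ne : f i ≠ f (f 0) := hf.involutive.injective.ne (hij.trans hj_lt).ne
  exact hf.not_231 hij hj_lt (by omega) hlt

theorem apply_eq_sub (hf : Is231AvoidingInvolution f) (hi : i ≤ f 0) : f i = f 0 - i := by
  have hanti := hf.strictAntiOn_Iic
  have hupper : f (0 + i) + i ≤ f 0 := add_le_of_strictAntiOn_Iic hanti (by omega)
  have hlower : f (i + (f 0 - i)) + (f 0 - i) ≤ f i :=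
    add_le_of_strictAntiOn_Iic hanti (by omega)
  rw [zero_add] at hupper
  omega

theorem lt_apply (hf : Is231AvoidingInvolution f) (hi : f 0 < i) : f 0 < f i := by
  by_contra! hle
  have hi_eq : f (f i) = f 0 - f i := hf.apply_eq_sub hle
  rw [hf.involutive i] at hi_eq
  omega

theorem add_dropLayer (hf : Is231AvoidingInvolution f) (i : ℕ) :
    f 0 + 1 + dropLayer f i = f (f 0 + 1 + i) :=
  Nat.add_sub_of_le (hf.lt_apply (by omega))

theorem prependLayer_dropLayer (hf : Is231AvoidingInvolution f) :
    prependLayer (f 0) (dropLayer f) = f := by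
  funext i
  obtain hi | ⟨j, rfl⟩ : i ≤ f 0 ∨ ∃ j, i = f 0 + 1 + j :=
    (le_or_gt i (f 0)).imp_right Nat.exists_eq_add_of_le
  · rw [prependLayer_of_le hi, hf.apply_eq_sub hi]
  · rw [prependLayer_add, hf.add_dropLayer]

protected theorem dropLayer (hf : Is231AvoidingInvolution f) :
    Is231AvoidingInvolution (dropLayer f) where
  involutive i := by
    rw [dropLayer, hf.add_dropLayer, hf.involutive, Nat.add_sub_cancel_left]
  not_231 i j k hij hjk hki hlt := by
    refine hf.not_231 (i := f 0 + 1 + i) (j := f 0 + 1 + j) (k := f 0 + 1 + k)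
      (by omega) (by omega) ?_ ?_
    all_goals
      simp only [← hf.add_dropLayer]
      omega

protected theorem prependLayer (hg : Is231AvoidingInvolution g) (a : ℕ) :
    Is231AvoidingInvolution (prependLayer a g) where
  involutive i := by
    rcases le_or_gt i a with hi | hi
    · rw [prependLayer_of_le hi, prependLayer_of_le (Nat.sub_le a i), Nat.sub_sub_self hi]
    · obtain ⟨j, rfl⟩ := Nat.exists_eq_add_of_le hi
      rw [prependLayer_add, prependLayer_add, hg.involutive]
  not_231 i j k hij hjk := by
    -- The first layer has no ascent and lies below the rest, so a 231 pattern must lie in `g`.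
    have hrest := @hg.not_231 (i - (a + 1)) (j - (a + 1)) (k - (a + 1))
    unfold prependLayer
    split_ifs <;> omega

end Is231AvoidingInvolution

/-- The 231-avoiding involutions of `{0, …, n - 1}`, extended by the identity to functions on `ℕ`
so that translating them involves no casts between `Fin` types. -/
def AvoidingInvolution (n : ℕ) : Type :=
  {f : ℕ → ℕ // Is231AvoidingInvolution f ∧ ∀ i, n ≤ i → f i = i}

namespace AvoidingInvolution

variable {n : ℕ}

theorem apply_lt (f : AvoidingInvolution n) {i : ℕ} (hi : i < n) : f.1 i < n := by
  by_contra! hle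
  have hfix : f.1 i = i := f.2.1.involutive.injective (f.2.2 _ hle)
  omega

instance : Finite (AvoidingInvolution n) := by
  refine Finite.of_injective
    (fun (f : AvoidingInvolution n) (i : Fin n) ↦ (⟨f.1 i, f.apply_lt i.2⟩ : Fin n)) ?_
  intro f g hfg
  refine Subtype.ext (funext fun i ↦ ?_)
  rcases lt_or_ge i n with hi | hi
  · exact congrArg Fin.val (congrFun hfg ⟨i, hi⟩)
  · rw [f.2.2 i hi, g.2.2 i hi]

noncomputable instance : Fintype (AvoidingInvolution n) :=
  Fintype.ofFinite _

instance : Unique (AvoidingInvolution 0) where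
  default := ⟨id, .id, fun _ _ ↦ rfl⟩
  uniq f := Subtype.ext (funext fun i ↦ f.2.2 i i.zero_le)

/-- The number of fixed points in `{0, …, n - 1}`; those `≥ n`, where `f` is the identity, are not
counted. -/
def numFixedPts (f : AvoidingInvolution n) : ℕ :=
  Nat.count (IsFixedPt f.1) n

/-- The 231-avoiding involution of `{0, …, n}` with first layer `{0, …, a}` followed by `g`. -/
def cons (a : Fin (n + 1)) (g : AvoidingInvolution (n - a)) : AvoidingInvolution (n + 1) :=
  ⟨prependLayer a g.1, g.2.1.prependLayer a, fun i hi ↦ by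
    obtain ⟨j, rfl⟩ := Nat.exists_eq_add_of_le (show (a : ℕ) + 1 ≤ i by omega)
    rw [prependLayer_add, g.2.2 j (by omega)]⟩

theorem numFixedPts_cons (a : Fin (n + 1)) (g : AvoidingInvolution (n - a)) :
    (cons a g).numFixedPts = (if Even (a : ℕ) then 1 else 0) + g.numFixedPts := by
  have hn : n + 1 = a + 1 + (n - a) := by omega
  rw [numFixedPts, numFixedPts, ← count_isFixedPt_prependLayer, ← hn]
  rfl

theorem bijective_cons : Bijective
    fun x : (a : Fin (n + 1)) × AvoidingInvolution (n - a) ↦ cons x.1 x.2 := by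
  constructor
  · rintro ⟨a, g⟩ ⟨b, h⟩ hgh
    have hfun : prependLayer a g.1 = prependLayer b h.1 := congrArg Subtype.val hgh
    obtain rfl : a = b := Fin.ext (by simpa only [prependLayer_zero] using congrFun hfun 0)
    obtain rfl : g = h := Subtype.ext (by
      simpa only [dropLayer_prependLayer] using congrArg dropLayer hfun)
    rfl
  · intro f
    have hzero : f.1 0 < n + 1 := f.apply_lt n.succ_pos
    refine ⟨⟨⟨f.1 0, hzero⟩, dropLayer f.1, f.2.1.dropLayer, fun i hi ↦ ?_⟩,
      Subtype.ext f.2.1.prependLayer_dropLayer⟩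
    change n - f.1 0 ≤ i at hi
    rw [dropLayer, f.2.2 _ (by omega), Nat.add_sub_cancel_left]

end AvoidingInvolution

section Permutations

variable {n : ℕ}

/-- The extension of a permutation of `{0, …, n - 1}` to `ℕ` by the identity. -/
def extendById (π : Equiv.Perm (Fin n)) : Equiv.Perm ℕ :=
  π.extendDomain Fin.equivSubtype

theorem extendById_val (π : Equiv.Perm (Fin n)) (i : Fin n) : extendById π i = π i :=
  π.extendDomain_apply_image Fin.equivSubtype i

theorem extendById_of_le (π : Equiv.Perm (Fin n)) {i : ℕ} (hi : n ≤ i) : extendById π i = i :=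
  π.extendDomain_apply_not_subtype Fin.equivSubtype hi.not_gt

theorem extendById_injective : Injective (extendById (n := n)) :=
  Equiv.Perm.extendDomainHom_injective Fin.equivSubtype

theorem count_isFixedPt_extendById (π : Equiv.Perm (Fin n)) :
    Nat.count (IsFixedPt (extendById π)) n = fixedPts π := by
  rw [fixedPts, Nat.count_eq_card_filter_range, card_filter, card_filter, sum_range]
  simp only [IsFixedPt, extendById_val, Fin.ext_iff]

theorem is231AvoidingInvolution_extendById_iff (π : Equiv.Perm (Fin n)) :
    Is231AvoidingInvolution (extendById π) ↔ IsInvolution π ∧ Avoids231 π := by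
  constructor
  · intro h
    refine ⟨fun i ↦ Fin.ext ?_, ?_⟩
    · rw [← extendById_val, ← extendById_val, h.involutive]
    · rintro ⟨i, j, k, hij, hjk, hki, hlt⟩
      refine h.not_231 hij hjk ?_ ?_ <;> simpa only [extendById_val]
  · rintro ⟨hinv, havoid⟩
    refine ⟨fun i ↦ ?_, fun i j k hij hjk hki hlt ↦ ?_⟩
    · rcases lt_or_ge i n with hi | hi
      · lift i to Fin n using hi
        rw [extendById_val, extendById_val, hinv]
      · rw [extendById_of_le π hi, extendById_of_le π hi]
    · rcases lt_or_ge k n with hk | hk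
      · lift k to Fin n using hk
        lift j to Fin n using hjk.trans k.2
        lift i to Fin n using hij.trans j.2
        rw [extendById_val, extendById_val] at hki hlt
        exact havoid ⟨i, j, k, hij, hjk, hki, hlt⟩
      · rw [extendById_of_le π hk] at hki
        rcases lt_or_ge i n with hi | hi
        · lift i to Fin n using hi
          rw [extendById_val] at hki
          omega
        · rw [extendById_of_le π hi] at hki
          omega

theorem exists_extendById_eq (f : AvoidingInvolution n) :
    ∃ π : Equiv.Perm (Fin n), extendById π = f.1 := by
  have hinv : Involutive fun i : Fin n ↦ (⟨f.1 i, f.apply_lt i.2⟩ : Fin n) :=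
    fun i ↦ Fin.ext (f.2.1.involutive i)
  refine ⟨hinv.toPerm, funext fun i ↦ ?_⟩
  rcases lt_or_ge i n with hi | hi
  · exact extendById_val hinv.toPerm ⟨i, hi⟩
  · rw [extendById_of_le _ hi, f.2.2 i hi]

theorem iCount231_eq_card (n k : ℕ) :
    iCount231 n k = Nat.card {f : AvoidingInvolution n // f.numFixedPts = k} := by
  refine Nat.card_congr (Equiv.ofBijective (fun π ↦ ⟨⟨extendById π.1,
    (is231AvoidingInvolution_extendById_iff π.1).2 ⟨π.2.1, π.2.2.1⟩,
    fun _ ↦ extendById_of_le π.1⟩, (count_isFixedPt_extendById π.1).trans π.2.2.2⟩) ⟨?_, ?_⟩)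
  · intro π σ h
    have hfun : ⇑(extendById π.1) = extendById σ.1 := congrArg (fun f ↦ f.1.1) h
    exact Subtype.ext (extendById_injective (DFunLike.coe_injective hfun))
  · rintro ⟨f, hk⟩
    obtain ⟨π, hπ⟩ := exists_extendById_eq f
    obtain ⟨hinv, havoid⟩ := (is231AvoidingInvolution_extendById_iff π).1 (hπ ▸ f.2.1)
    refine ⟨⟨π, hinv, havoid, ?_⟩, Subtype.ext (Subtype.ext hπ)⟩
    rw [← count_isFixedPt_extendById, hπ, ← hk, AvoidingInvolution.numFixedPts]

end Permutations

/-- The generating polynomial of the 231-avoiding involutions of `{0, …, n - 1}` by number of fixed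
points. -/
noncomputable def fixedPtsPoly (n : ℕ) : ℕ[X] :=
  ∑ f : AvoidingInvolution n, X ^ f.numFixedPts

theorem coeff_fixedPtsPoly (n k : ℕ) : (fixedPtsPoly n).coeff k = iCount231 n k := by
  rw [iCount231_eq_card, Nat.card_eq_fintype_card, Fintype.card_subtype, card_filter, fixedPtsPoly,
    finsetSum_coeff]
  simp only [coeff_X_pow, eq_comm]

theorem fixedPtsPoly_succ (n : ℕ) : fixedPtsPoly (n + 1) =
    ∑ a ∈ range (n + 1), X ^ (if Even a then 1 else 0) * fixedPtsPoly (n - a) := by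
  calc fixedPtsPoly (n + 1)
    _ = ∑ x : (a : Fin (n + 1)) × AvoidingInvolution (n - a),
          X ^ (AvoidingInvolution.cons x.1 x.2).numFixedPts :=
      (AvoidingInvolution.bijective_cons.sum_comp fun f ↦ X ^ f.numFixedPts).symm
    _ = ∑ a : Fin (n + 1), X ^ (if Even (a : ℕ) then 1 else 0) * fixedPtsPoly (n - a) := by
      simp only [Fintype.sum_sigma, AvoidingInvolution.numFixedPts_cons, pow_add, mul_sum,
        fixedPtsPoly]
    _ = _ := (sum_range fun a ↦ X ^ (if Even a then 1 else 0) * fixedPtsPoly (n - a)).symm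

theorem fixedPtsPoly_zero : fixedPtsPoly 0 = 1 := by
  simp [fixedPtsPoly, AvoidingInvolution.numFixedPts]

theorem fixedPtsPoly_one : fixedPtsPoly 1 = X := by
  simp [fixedPtsPoly_succ 0, fixedPtsPoly_zero]

theorem fixedPtsPoly_two : fixedPtsPoly 2 = X ^ 2 + 1 := by
  simp [fixedPtsPoly_succ 1, sum_range_succ, fixedPtsPoly_one, fixedPtsPoly_zero, sq]

theorem fixedPtsPoly_add_three (n : ℕ) :
    fixedPtsPoly (n + 3) = X * fixedPtsPoly (n + 2) + 2 * fixedPtsPoly (n + 1) := by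
  have htail : ∑ a ∈ range (n + 1),
      X ^ (if Even (a + 2) then 1 else 0) * fixedPtsPoly (n + 2 - (a + 2)) =
        fixedPtsPoly (n + 1) := by
    simp only [fixedPtsPoly_succ n, Nat.even_add, even_two, iff_true, Nat.add_sub_add_right]
  rw [fixedPtsPoly_succ (n + 2), sum_range_succ', sum_range_succ', htail]
  simp only [zero_add, Nat.not_even_one, ↓reduceIte, pow_zero, Nat.add_one_sub_one, one_mul,
    Even.zero, pow_one, tsub_zero]
  ring

theorem coeff_zero_fixedPtsPoly_add_three (n : ℕ) :
    (fixedPtsPoly (n + 3)).coeff 0 = 2 * (fixedPtsPoly (n + 1)).coeff 0 := by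
  rw [fixedPtsPoly_add_three, coeff_add, coeff_X_mul_zero, coeff_ofNat_mul, zero_add]

theorem coeff_succ_fixedPtsPoly_add_three (n k : ℕ) :
    (fixedPtsPoly (n + 3)).coeff (k + 1) =
      (fixedPtsPoly (n + 2)).coeff k + 2 * (fixedPtsPoly (n + 1)).coeff (k + 1) := by
  rw [fixedPtsPoly_add_three, coeff_add, coeff_X_mul, coeff_ofNat_mul]

theorem natDegree_fixedPtsPoly_le (n : ℕ) : (fixedPtsPoly n).natDegree ≤ n := by
  refine natDegree_sum_le_of_forall_le _ _ fun f _ ↦ (natDegree_X_pow_le _).trans ?_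
  exact Nat.count_le _

theorem coeff_fixedPtsPoly_of_odd : ∀ {n k : ℕ}, Odd (n + k) → (fixedPtsPoly n).coeff k = 0
  | 0, k, h => by
    have hk : k ≠ 0 := by grind
    rw [fixedPtsPoly_zero, coeff_one, if_neg hk]
  | 1, k, h => by
    have hk : 1 ≠ k := by grind
    rw [fixedPtsPoly_one, coeff_X, if_neg hk]
  | 2, k, h => by
    have hk₀ : k ≠ 0 := by grind
    have hk₂ : k ≠ 2 := by grind
    rw [fixedPtsPoly_two, coeff_add, coeff_X_pow, coeff_one, if_neg hk₀, if_neg hk₂, add_zero]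
  | n + 3, 0, h => by
    have h₁ : Odd (n + 1 + 0) := by grind
    rw [coeff_zero_fixedPtsPoly_add_three, coeff_fixedPtsPoly_of_odd h₁]
  | n + 3, k + 1, h => by
    have h₁ : Odd (n + 1 + (k + 1)) := by grind
    have h₂ : Odd (n + 2 + k) := by grind
    rw [coeff_succ_fixedPtsPoly_add_three, coeff_fixedPtsPoly_of_odd h₁,
      coeff_fixedPtsPoly_of_odd h₂]

theorem coeff_fixedPtsPoly_self : ∀ n : ℕ, (fixedPtsPoly n).coeff n = 1
  | 0 => by simp [fixedPtsPoly_zero]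
  | 1 => by simp [fixedPtsPoly_one]
  | 2 => by simp [fixedPtsPoly_two, coeff_one]
  | n + 3 => by
    have hdeg : (fixedPtsPoly (n + 1)).coeff (n + 3) = 0 :=
      coeff_eq_zero_of_natDegree_lt ((natDegree_fixedPtsPoly_le _).trans_lt (by omega))
    rw [coeff_succ_fixedPtsPoly_add_three, coeff_fixedPtsPoly_self (n + 2), hdeg]

theorem coeff_fixedPtsPoly_two_mul_add : ∀ m k : ℕ, (fixedPtsPoly (2 * (m + 1) + k)).coeff k =
    2 ^ m * ((m + 1 + k).choose (m + 1) + (m + k).choose (m + 1))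
  | 0, 0 => by simp [fixedPtsPoly_two]
  | m + 1, 0 => by
    rw [show 2 * (m + 1 + 1) + 0 = 2 * m + 1 + 3 by ring, coeff_zero_fixedPtsPoly_add_three,
      show 2 * m + 1 + 1 = 2 * (m + 1) + 0 by ring, coeff_fixedPtsPoly_two_mul_add m 0]
    simp [pow_succ']
  | 0, k + 1 => by
    rw [show 2 * (0 + 1) + (k + 1) = k + 3 by ring, coeff_succ_fixedPtsPoly_add_three,
      show k + 2 = 2 * (0 + 1) + k by ring, coeff_fixedPtsPoly_two_mul_add 0 k,
      coeff_fixedPtsPoly_self]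
    simp only [pow_zero, zero_add, Nat.choose_one_right, one_mul, mul_one]
    ring
  | m + 1, k + 1 => by
    have pascal : (m + 1 + 1 + (k + 1)).choose (m + 1 + 1) =
        (m + 1 + 1 + k).choose (m + 1) + (m + 1 + 1 + k).choose (m + 1 + 1) :=
      Nat.choose_succ_succ' _ _
    have pascal' : (m + 1 + (k + 1)).choose (m + 1 + 1) =
        (m + 1 + k).choose (m + 1) + (m + 1 + k).choose (m + 1 + 1) :=
      Nat.choose_succ_succ' _ _
    have recursion : (fixedPtsPoly (2 * (m + 1 + 1) + (k + 1))).coeff (k + 1) =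
        (fixedPtsPoly (2 * (m + 1 + 1) + k)).coeff k +
          2 * (fixedPtsPoly (2 * (m + 1) + (k + 1))).coeff (k + 1) := by
      rw [show 2 * (m + 1 + 1) + (k + 1) = 2 * m + k + 2 + 3 by ring,
        show 2 * (m + 1 + 1) + k = 2 * m + k + 2 + 2 by ring,
        show 2 * (m + 1) + (k + 1) = 2 * m + k + 2 + 1 by ring, coeff_succ_fixedPtsPoly_add_three]
    rw [recursion, coeff_fixedPtsPoly_two_mul_add (m + 1) k,
      coeff_fixedPtsPoly_two_mul_add m (k + 1), pascal, pascal',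
      show m + 1 + (k + 1) = m + 1 + 1 + k by ring,
      show m + (k + 1) = m + 1 + k by ring]
    ring

/-- For all `n ≥ 1`, `0 ≤ k ≤ n` with `n + k` even,
`2 · i_n^k(231) = 2^{(n-k)/2} · ( C((n+k)/2, (n-k)/2) + C((n+k-2)/2, (n-k)/2) )`
(the exact form of `i_n^k(231) = 2^{(n-k-2)/2} · (…)`); when `n + k` is odd,
`i_n^k(231) = 0`. -/
theorem statement6 (n k : ℕ) (hn : 1 ≤ n) (hk : k ≤ n) :
    (Even (n + k) → 2 * iCount231 n k =
      2 ^ ((n - k) / 2) *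
        (((n + k) / 2).choose ((n - k) / 2) + ((n + k - 2) / 2).choose ((n - k) / 2))) ∧
    (Odd (n + k) → iCount231 n k = 0) := by
  rw [← coeff_fixedPtsPoly]
  refine ⟨fun heven ↦ ?_, coeff_fixedPtsPoly_of_odd⟩
  obtain ⟨m, rfl⟩ : ∃ m, n = 2 * m + k := by
    obtain ⟨c, hc⟩ := heven
    exact ⟨c - k, by omega⟩
  rcases m with _ | m
  · simp [coeff_fixedPtsPoly_self]
  · have hdiff : (2 * (m + 1) + k - k) / 2 = m + 1 := by omega
    have hsum : (2 * (m + 1) + k + k) / 2 = m + 1 + k := by omega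
    have hpred : (2 * (m + 1) + k + k - 2) / 2 = m + k := by omega
    rw [hdiff, hsum, hpred, coeff_fixedPtsPoly_two_mul_add, pow_succ', mul_assoc]
end

section
/- For every n ≥ 1, a permutation π of {1,2,…,n} avoids both of the patterns 231 and 312 if and only if π is an involution that avoids the pattern 231. -/
/-- A permutation of `Fin n` avoids the pattern 312. -/
def Avoids312 {n : ℕ} (π : Equiv.Perm (Fin n)) : Prop :=
  ¬ ∃ i₁ i₂ i₃ : Fin n, i₁ < i₂ ∧ i₂ < i₃ ∧ (π i₂ < π i₃ ∧ π i₃ < π i₁)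

/-!
Call two positions related when they coincide or form an inversion. An induced path on three
vertices in the inversion graph is an occurrence of 231 or 312, so for `π` avoiding both patterns
this relation is an equivalence; its classes are the layers of `π`. Avoidance also puts `i` and
`π i` into the same layer. Hence `π` preserves layers, reverses the order inside a layer and keeps
the order between different layers, so `π ∘ π` is increasing on a finite chain and is the identity.
Conversely, taking inverses exchanges the two patterns.
-/

section

variable {n : ℕ} {π : Equiv.Perm (Fin n)} {i j k : Fin n}

theorem avoids231_symm_iff : Avoids231 π.symm ↔ Avoids312 π := by
  refine not_congr ⟨?_, ?_⟩
  · rintro ⟨a, b, c, hab, hbc, hca, hab'⟩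
    exact ⟨π.symm c, π.symm a, π.symm b, hca, hab', by simpa using ⟨hab, hbc⟩⟩
  · rintro ⟨a, b, c, hab, hbc, hbc', hca⟩
    exact ⟨π b, π c, π a, hbc', hca, by simpa using ⟨hab, hbc⟩⟩

theorem IsInvolution.symm_eq (h : IsInvolution π) : π.symm = π :=
  Equiv.ext fun i => π.symm_apply_eq.2 (h i).symm

theorem Avoids231.apply_apply_lt (h231 : Avoids231 π) (hi : i < π i) : π (π i) < π i := by
  by_contra! hle
  have hlt : π i < π (π i) := hle.lt_of_ne (π.injective.ne hi.ne)
  -- `π` maps `Ici (π i)` into itself, so by finiteness `π⁻¹` does too; but `i` is not in it.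
  have maps_Ici : Set.MapsTo π (Set.Ici (π i)) (Set.Ici (π i)) := by
    intro k (hk : π i ≤ k)
    obtain rfl | hk := hk.eq_or_lt
    · exact hle
    · by_contra hki
      exact h231 ⟨i, π i, k, hi, hk, not_le.1 hki, hlt⟩
  have mem_Ici : π.symm (π i) ∈ Set.Ici (π i) :=
    Equiv.Perm.perm_symm_mapsTo_of_mapsTo π maps_Ici Set.self_mem_Ici
  rw [π.symm_apply_apply] at mem_Ici
  exact hi.not_ge mem_Ici

theorem Avoids312.lt_apply_apply (h312 : Avoids312 π) (hi : π i < i) : π i < π (π i) := by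
  by_contra! hle
  have hlt : π (π i) < π i := hle.lt_of_ne (π.injective.ne hi.ne)
  -- For `π⁻¹` at the point `π (π i)`, `Avoids231.apply_apply_lt` is the contrapositive.
  have hlt_symm : i < π i := by
    simpa using (avoids231_symm_iff.2 h312).apply_apply_lt (i := π (π i)) (by simpa using hlt)
  exact hi.not_gt hlt_symm

/-- Two positions are in the same layer of `π` if they are equal or form an inversion. The
equivalence `i ≤ j ↔ π j ≤ π i` covers the cases `i < j`, `i = j` and `j < i` at once. -/
def SameLayer (π : Equiv.Perm (Fin n)) (i j : Fin n) : Prop :=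
  i ≤ j ↔ π j ≤ π i

namespace SameLayer

theorem iff_of_le (hij : i ≤ j) : SameLayer π i j ↔ π j ≤ π i :=
  iff_true_left hij

theorem symm (h : SameLayer π i j) : SameLayer π j i := by
  obtain rfl | hne := eq_or_ne i j
  · exact h
  · have hne' : π i ≠ π j := π.injective.ne hne
    unfold SameLayer at *
    grind

theorem trans (h231 : Avoids231 π) (h312 : Avoids312 π) (hij : SameLayer π i j)
    (hjk : SameLayer π j k) : SameLayer π i k := by
  wlog hik : i ≤ k generalizing i k
  · exact (this hjk.symm hij.symm (le_of_not_ge hik)).symm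
  rw [iff_of_le hik]
  by_contra! hlt
  have hik : i < k := hik.lt_of_ne fun h => hlt.ne (congrArg π h)
  obtain hji | hij' := lt_or_ge j i
  · have hkj : π k < π j := ((iff_of_le (hji.trans hik).le).1 hjk).lt_of_ne
      (π.injective.ne (hji.trans hik).ne')
    exact h312 ⟨j, i, k, hji, hik, hlt, hkj⟩
  obtain hjk' | hkj := le_or_gt j k
  · exact hlt.not_ge (((iff_of_le hjk').1 hjk).trans ((iff_of_le hij').1 hij))
  · have hji : π j < π i := ((iff_of_le hij').1 hij).lt_of_ne
      (π.injective.ne (hik.trans hkj).ne')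
    exact h231 ⟨i, k, j, hik, hkj, hji, hlt⟩

end SameLayer

theorem sameLayer_apply_self (h231 : Avoids231 π) (h312 : Avoids312 π) (i : Fin n) :
    SameLayer π (π i) i := by
  obtain hi | hi := le_total i (π i)
  · refine SameLayer.symm ((SameLayer.iff_of_le hi).2 ?_)
    obtain heq | hlt := hi.eq_or_lt
    · rw [← heq, ← heq]
    · exact (h231.apply_apply_lt hlt).le
  · refine (SameLayer.iff_of_le hi).2 ?_
    obtain heq | hlt := hi.eq_or_lt
    · rw [heq, heq]
    · exact (h312.lt_apply_apply hlt).le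

theorem sameLayer_apply_apply_iff (h231 : Avoids231 π) (h312 : Avoids312 π) :
    SameLayer π (π i) (π j) ↔ SameLayer π i j := by
  have hi := sameLayer_apply_self h231 h312 i
  have hj := sameLayer_apply_self h231 h312 j
  exact ⟨fun h => (hi.symm.trans h231 h312 h).trans h231 h312 hj,
    fun h => (hi.trans h231 h312 h).trans h231 h312 hj.symm⟩

theorem monotone_apply_apply (h231 : Avoids231 π) (h312 : Avoids312 π) :
    Monotone fun i => π (π i) := by
  intro i j hij
  have reverses_iff : (π j ≤ π i ↔ π (π i) ≤ π (π j)) ↔ π j ≤ π i :=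
    calc SameLayer π (π j) (π i)
      _ ↔ SameLayer π j i := sameLayer_apply_apply_iff h231 h312
      _ ↔ SameLayer π i j := ⟨SameLayer.symm, SameLayer.symm⟩
      _ ↔ π j ≤ π i := SameLayer.iff_of_le hij
  -- `(P ↔ Q) ↔ P` forces `Q`, which here is the goal.
  tauto

theorem isInvolution_of_avoids (h231 : Avoids231 π) (h312 : Avoids312 π) : IsInvolution π := by
  have strictMono : StrictMono fun i => π (π i) :=
    (monotone_apply_apply h231 h312).strictMono_of_injective (π.injective.comp π.injective)
  exact congrFun strictMono.eq_id

theorem IsInvolution.avoids312 (h : IsInvolution π) (h231 : Avoids231 π) : Avoids312 π := by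
  rwa [← avoids231_symm_iff, h.symm_eq]

end

/-- For every `n ≥ 1`, a permutation of `{1, …, n}` avoids both 231 and 312 if and only
if it is an involution avoiding 231. -/
theorem statement8 (n : ℕ) (hn : 1 ≤ n) (π : Equiv.Perm (Fin n)) :
    (Avoids231 π ∧ Avoids312 π) ↔ (IsInvolution π ∧ Avoids231 π) := by
  constructor
  · rintro ⟨h231, h312⟩
    exact ⟨isInvolution_of_avoids h231 h312, h231⟩
  · rintro ⟨hinv, h231⟩
    exact ⟨h231, hinv.avoids312 h231⟩
end
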